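/- Let 0 < θ < 1, let 1 ≤ q₀, q₁ < ∞ be constants, let p₀, p₁ be globally log-Hölder continuous exponents with 1 ≤ p₀⁻ ≤ p₀⁺ < ∞ and 1 ≤ p₁⁻ ≤ p₁⁺ < ∞, and let α₀, α₁ : ℝ^n → ℝ be locally log-Hölder continuous. Define 1/p(·) := (1−θ)/p₀(·) + θ/p₁(·), 1/q := (1−θ)/q₀ + θ/q₁, α(·) := (1−θ)α₀(·) + θα₁(·), and γ(x) := p(x)/p₀(x) − q/q₀. Assume that γ(x) ≠ 0 for all x ∈ ℝ^n. Then the Calderón product (f^{α₀(·)}_{p₀(·),q₀})^{1−θ} · (f^{α₁(·)}_{p₁(·),q₁})^{θ} equals f^{α(·)}_{p(·),q} with equivalent norms. -/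

import Mathlib

open MeasureTheory ENNReal Real Set

noncomputable section

/-- Euclidean space ℝ^n. -/
abbrev En (n : ℕ) := EuclideanSpace ℝ (Fin n)

/-- `g` is locally log-Hölder continuous with constant `c`. -/
def LocLogHolder {n : ℕ} (c : ℝ) (g : En n → ℝ) : Prop :=
  0 < c ∧ ∀ x y : En n, |g x - g y| ≤ c / Real.log (Real.exp 1 + 1 / ‖x - y‖)

/-- `g` is globally log-Hölder continuous with local constant `c`. -/
def GlobLogHolder {n : ℕ} (c : ℝ) (g : En n → ℝ) : Prop :=
  LocLogHolder c g ∧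
    ∃ (gi cd : ℝ), 0 < cd ∧ ∀ x : En n, |g x - gi| ≤ cd / Real.log (Real.exp 1 + ‖x‖)

/-- The kernel η_{v,h}(x) = 2^{nv} (1 + 2^v |x|)^{-h}. -/
def eta (n : ℕ) (v : ℕ) (h : ℝ) (x : En n) : ℝ :=
  (2 : ℝ) ^ (n * v) * (1 + (2 : ℝ) ^ v * ‖x‖) ^ (-h)

/-- The dyadic cube Q_{v,m}. -/
def dyadicCube (n : ℕ) (v : ℤ) (m : Fin n → ℤ) : Set (En n) :=
  {x | ∀ i, (m i : ℝ) ≤ (2 : ℝ) ^ v * x i ∧ (2 : ℝ) ^ v * x i < m i + 1}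

/-- Luxemburg (quasi-)norm of an ℝ≥0∞-valued function with variable exponent `p`. -/
def luxNorm {n : ℕ} (p : En n → ℝ) (F : En n → ℝ≥0∞) : ℝ≥0∞ :=
  sInf {c : ℝ≥0∞ | 0 < c ∧ ∫⁻ x, (F x / c) ^ p x ≤ 1}

/-- The mixed Lebesgue-sequence space norm ‖(F_v)_v‖_{L^{p(·)}(ℓ_{q(·)})}. -/
def mixedNorm {n : ℕ} (p q : En n → ℝ) (F : ℕ → En n → ℝ≥0∞) : ℝ≥0∞ :=
  luxNorm p fun x => (∑' v : ℕ, F v x ^ q x) ^ (1 / q x)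

/-- The sequence space norm ‖λ‖_{f^{α(·)}_{p(·),q(·)}}. -/
def seqNorm {n : ℕ} (α p q : En n → ℝ) (lam : ℕ → (Fin n → ℤ) → ℂ) : ℝ≥0∞ :=
  mixedNorm p q fun v x =>
    ∑' m : Fin n → ℤ,
      ENNReal.ofReal ((2 : ℝ) ^ ((v : ℝ) * (α x + n / 2)) * ‖lam v m‖) *
        (dyadicCube n (v : ℤ) m).indicator (fun _ => (1 : ℝ≥0∞)) x

/-- The sequence space norm ‖λ‖_{f^{α(·)}_{∞,q}}. -/
def seqNormInf {n : ℕ} (α : En n → ℝ) (q : ℝ) (lam : ℕ → (Fin n → ℤ) → ℂ) : ℝ≥0∞ :=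
  ⨆ (vQ : ℤ) (mQ : Fin n → ℤ),
    volume (dyadicCube n vQ mQ) ^ (-(1 / q)) *
      (∑' v : ℕ, if vQ ≤ (v : ℤ) then
          ∫⁻ x in dyadicCube n vQ mQ,
            ∑' m : Fin n → ℤ,
              ENNReal.ofReal ((2 : ℝ) ^ ((v : ℝ) * (α x + n / 2) * q) * ‖lam v m‖ ^ q) *
                (dyadicCube n (v : ℤ) m).indicator (fun _ => (1 : ℝ≥0∞)) x
        else 0) ^ (1 / q)

/-- The Calderón product (quasi-)norm associated to two sequence space norms. -/
def calderonNorm {n : ℕ} (N0 N1 : (ℕ → (Fin n → ℤ) → ℂ) → ℝ≥0∞) (θ : ℝ)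
    (lam : ℕ → (Fin n → ℤ) → ℂ) : ℝ≥0∞ :=
  sInf {M : ℝ≥0∞ | ∃ μ ν : ℕ → (Fin n → ℤ) → ℂ, N0 μ ≤ 1 ∧ N1 ν ≤ 1 ∧
    ∀ v m, ENNReal.ofReal ‖lam v m‖ ≤
      M * ENNReal.ofReal ‖μ v m‖ ^ (1 - θ) * ENNReal.ofReal ‖ν v m‖ ^ θ}

/-! Passing to the coefficients `b = (2^{v(α + n/2)} |λ|)^q`, with `α` frozen at the corners of
the dyadic cubes, turns the three spaces into spaces with smoothness `0`, fine index `1` and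
exponents `s = p / q` and `sᵢ = pᵢ / qᵢ`, where `1 / s = t / s₀ + t' / s₁` and `t + t' = 1`.

Such a `b` is factored as `b₀ ^ t * b₁ ^ t'` with `bᵢ = b * T ^ (s / sᵢ - 1)`, where `T` is the sum
of `b` over a cube and its dyadic ancestors and `s / sᵢ` is frozen at the corner of the cube. Were
`s / sᵢ` not frozen, the sum of `bᵢ` over the cubes containing a point `x` would be a telescoping
sum, comparable to `S(x) ^ (s(x) / sᵢ(x))` for the full sum `S(x)` of `b`, so the modular of `bᵢ` in
the exponent `sᵢ` is controlled by that of `b` in the exponent `s`. Freezing costs a bounded factor: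
after a rapidly decaying positive sequence has been added to `b`, `|log T|` is at most a multiple of
the logarithmic scale of the cube, whereas log-Hölder continuous exponents oscillate on the cube by
at most a multiple of its inverse.

The opposite inequality is Hölder's inequality for sums, followed by Young's inequality for the
modulars.
-/

open Asymptotics

section DyadicGrid

variable {n : ℕ}

/-- The index `m` for which the dyadic cube `Q_{v,m}` contains `x`. -/
def dyadicIndex (v : ℕ) (x : En n) : Fin n → ℤ := fun i => ⌊(2 : ℝ) ^ v * x i⌋

/-- The lower corner `2⁻ᵛ m` of the dyadic cube `Q_{v,m}`, the point at which variable exponents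
are frozen. -/
def dyadicCorner (v : ℕ) (m : Fin n → ℤ) : En n := WithLp.toLp 2 fun i => (m i : ℝ) / 2 ^ v

/-- The lower corner of the dyadic cube of side `2⁻ᵛ` containing `x`. -/
abbrev dyadicRound (v : ℕ) (x : En n) : En n := dyadicCorner v (dyadicIndex v x)

lemma mem_dyadicCube_iff {v : ℕ} {m : Fin n → ℤ} {x : En n} :
    x ∈ dyadicCube n v m ↔ dyadicIndex v x = m := by
  simp only [dyadicCube, dyadicIndex, Set.mem_ofPred_eq, zpow_natCast, funext_iff, Int.floor_eq_iff]

lemma dyadicIndex_dyadicRound {u v : ℕ} (huv : u ≤ v) (x : En n) :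
    dyadicIndex u (dyadicRound v x) = dyadicIndex u x := by
  obtain ⟨k, rfl⟩ := Nat.exists_eq_add_of_le huv
  funext i
  have hcoarsen (z : ℝ) : (2 : ℝ) ^ u * (z / 2 ^ (u + k)) = z / (2 ^ k : ℕ) := by
    rw [pow_add]; push_cast; field_simp
  have hx : (2 : ℝ) ^ u * x i = 2 ^ (u + k) * x i / (2 ^ k : ℕ) := by
    rw [pow_add]; push_cast; field_simp
  simp only [dyadicIndex, dyadicCorner]
  rw [hcoarsen, hx, Int.floor_div_natCast, Int.floor_div_natCast, Int.floor_intCast]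

lemma measurable_dyadicIndex (v : ℕ) : Measurable (dyadicIndex v : En n → Fin n → ℤ) :=
  measurable_pi_lambda _ fun i => Int.measurable_floor.comp (by fun_prop)

lemma measurableSet_dyadicCube (v : ℕ) (m : Fin n → ℤ) : MeasurableSet (dyadicCube n v m) := by
  have : dyadicCube n v m = dyadicIndex v ⁻¹' {m} := Set.ext fun x => mem_dyadicCube_iff
  exact this ▸ measurable_dyadicIndex v (measurableSet_singleton m)

lemma volume_dyadicCube (v : ℕ) (m : Fin n → ℤ) :
    volume (dyadicCube n v m) = ENNReal.ofReal ((1 / 2 ^ v) ^ n) := by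
  have h2 : (0 : ℝ) < 2 ^ v := by positivity
  have hbox : dyadicCube n v m = (MeasurableEquiv.toLp 2 (Fin n → ℝ)).symm ⁻¹'
      (univ.pi fun i => Ico ((m i : ℝ) / 2 ^ v) ((m i + 1 : ℝ) / 2 ^ v)) := by
    ext x
    simp only [dyadicCube, Set.mem_ofPred_eq, mem_preimage, mem_pi, mem_univ, forall_true_left,
      mem_Ico, zpow_natCast, div_le_iff₀ h2, lt_div_iff₀ h2, mul_comm _ ((2 : ℝ) ^ v)]
    rfl
  have hside (i : Fin n) : (m i + 1 : ℝ) / 2 ^ v - m i / 2 ^ v = 1 / 2 ^ v := by ring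
  rw [hbox, (EuclideanSpace.volume_preserving_symm_measurableEquiv_toLp (Fin n)).measure_preimage
    (MeasurableSet.univ_pi fun i => measurableSet_Ico).nullMeasurableSet, Real.volume_pi_Ico]
  simp only [hside, Finset.prod_const, Finset.card_univ, Fintype.card_fin,
    ENNReal.ofReal_pow (one_div_nonneg.2 h2.le)]

lemma norm_sub_dyadicRound_le (v : ℕ) (x : En n) : ‖x - dyadicRound v x‖ ≤ n / 2 ^ v := by
  have hcoord (i : Fin n) : ‖(x - dyadicRound v x) i‖ ≤ 1 / 2 ^ v := by
    have hfract : (x - dyadicRound v x) i = Int.fract (2 ^ v * x i) / 2 ^ v := by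
      simp only [dyadicCorner, dyadicIndex, PiLp.sub_apply, ← Int.self_sub_floor]
      field_simp
    rw [hfract, Real.norm_of_nonneg (by positivity)]
    gcongr
    exact (Int.fract_lt_one _).le
  calc ‖x - dyadicRound v x‖ ≤ ∑ i, ‖(x - dyadicRound v x) i‖ := by
        nth_rw 1 [← (EuclideanSpace.basisFun (Fin n) ℝ).sum_repr (x - dyadicRound v x)]
        refine (norm_sum_le _ _).trans_eq (Finset.sum_congr rfl fun i _ => ?_)
        simp [norm_smul]
    _ ≤ ∑ _i : Fin n, 1 / 2 ^ v := Finset.sum_le_sum fun i _ => hcoord i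
    _ = n / 2 ^ v := by simp [div_eq_mul_inv]

lemma norm_sub_dyadicRound_le_dim (v : ℕ) (x : En n) : ‖x - dyadicRound v x‖ ≤ n :=
  (norm_sub_dyadicRound_le v x).trans
    (div_le_self n.cast_nonneg (one_le_pow₀ (by norm_num)))

lemma norm_le_norm_dyadicRound_add (v : ℕ) (x : En n) : ‖x‖ ≤ ‖dyadicRound v x‖ + n := by
  linarith [norm_le_norm_add_norm_sub' x (dyadicRound v x), norm_sub_dyadicRound_le_dim v x]

lemma norm_dyadicRound_le_norm_add (v : ℕ) (x : En n) : ‖dyadicRound v x‖ ≤ ‖x‖ + n := by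
  linarith [norm_le_norm_add_norm_sub x (dyadicRound v x), norm_sub_dyadicRound_le_dim v x]

end DyadicGrid

section SlowVariation

variable {n : ℕ} {c c' : ℝ} {g h p r : En n → ℝ}

lemma one_le_log_exp_one_add {t : ℝ} (ht : 0 ≤ t) : 1 ≤ Real.log (exp 1 + t) := by
  rw [Real.le_log_iff_exp_le (by positivity)]
  linarith

lemma log_exp_one_add_le_mul {s t d : ℝ} (hs : 0 ≤ s) (ht : 0 ≤ t) (hd : 0 ≤ d) (h : t ≤ s + d) :
    Real.log (exp 1 + t) ≤ (Real.log (1 + d) + 1) * Real.log (exp 1 + s) := by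
  have hprod : exp 1 + t ≤ (1 + d) * (exp 1 + s) := by
    nlinarith [Real.one_le_exp (show (0 : ℝ) ≤ 1 by norm_num), mul_nonneg hd hs]
  have hlog := Real.log_le_log (by positivity) hprod
  rw [Real.log_mul (by positivity) (by positivity)] at hlog
  nlinarith [one_le_log_exp_one_add hs, Real.log_nonneg (show 1 ≤ 1 + d by linarith)]

lemma natCast_add_one_le_mul_log {v : ℕ} {d : ℝ} (hd : 0 < d) (hdv : d ≤ n / 2 ^ v) :
    (v + 1 : ℝ) ≤ ((Real.log n + 1) / Real.log 2 + 1) * Real.log (exp 1 + 1 / d) := by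
  have hlog2 : 0 < Real.log 2 := Real.log_pos (by norm_num)
  have hn : (1 : ℝ) ≤ n := by
    rcases n.eq_zero_or_pos with rfl | hn
    · simp only [Nat.cast_zero, zero_div] at hdv
      linarith
    · exact_mod_cast hn
  set L := Real.log (exp 1 + 1 / d)
  have hL : 1 ≤ L := one_le_log_exp_one_add (by positivity)
  have hpow : (2 : ℝ) ^ v ≤ n * (exp 1 + 1 / d) := by
    have hscale : (2 : ℝ) ^ v ≤ n * (1 / d) := by
      rw [mul_one_div, le_div_iff₀ hd]
      rwa [le_div_iff₀ (by positivity), mul_comm] at hdv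
    nlinarith [Real.exp_pos 1]
  have hlog := Real.log_le_log (by positivity) hpow
  rw [Real.log_pow, Real.log_mul (by positivity) (by positivity)] at hlog
  have hv : (v : ℝ) ≤ (Real.log n + 1) / Real.log 2 * L := by
    rw [div_mul_eq_mul_div, le_div_iff₀ hlog2]
    nlinarith [Real.log_nonneg hn]
  linarith

lemma LocLogHolder.continuous (hg : LocLogHolder c g) : Continuous g := by
  obtain ⟨hc, hg⟩ := hg
  refine Metric.continuous_iff.2 fun y ε hε => ⟨exp (-(c / ε)), Real.exp_pos _, fun x hx => ?_⟩
  rw [dist_eq_norm] at hx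
  rw [Real.dist_eq]
  rcases eq_or_ne x y with rfl | hne
  · simpa using hε
  have hpos : 0 < ‖x - y‖ := norm_pos_iff.2 (sub_ne_zero.2 hne)
  have hexp : exp (c / ε) < 1 / ‖x - y‖ := by
    rwa [lt_one_div (Real.exp_pos _) hpos, one_div, ← Real.exp_neg]
  have hlog : c / ε < Real.log (exp 1 + 1 / ‖x - y‖) :=
    (Real.lt_log_iff_exp_lt (by positivity)).2 (by linarith [Real.exp_pos 1])
  have hlog_pos : 0 < c / ε := by positivity
  calc |g x - g y| ≤ c / Real.log (exp 1 + 1 / ‖x - y‖) := hg x y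
    _ < ε := by
      rw [div_lt_iff₀ (hlog_pos.trans hlog)]
      rwa [div_lt_iff₀ hε, mul_comm] at hlog

lemma LocLogHolder.add (hg : LocLogHolder c g) (hh : LocLogHolder c' h) :
    LocLogHolder (c + c') (fun x => g x + h x) := by
  refine ⟨add_pos hg.1 hh.1, fun x y => ?_⟩
  calc |g x + h x - (g y + h y)| = |(g x - g y) + (h x - h y)| := by ring_nf
    _ ≤ |g x - g y| + |h x - h y| := abs_add_le _ _
    _ ≤ _ := (add_le_add (hg.2 x y) (hh.2 x y)).trans_eq (add_div ..).symm

lemma LocLogHolder.const_mul {a : ℝ} (ha : 0 < a) (hg : LocLogHolder c g) :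
    LocLogHolder (a * c) (fun x => a * g x) := by
  refine ⟨mul_pos ha hg.1, fun x y => ?_⟩
  rw [← mul_sub, abs_mul, abs_of_pos ha, mul_div_assoc]
  exact mul_le_mul_of_nonneg_left (hg.2 x y) ha.le

lemma LocLogHolder.exists_abs_sub_dyadicRound_mul_le (hg : LocLogHolder c g) :
    ∃ K, ∀ (v : ℕ) (x : En n), |g x - g (dyadicRound v x)| * (v + 1) ≤ K := by
  obtain ⟨hc, hg⟩ := hg
  refine ⟨c * ((Real.log n + 1) / Real.log 2 + 1), fun v x => ?_⟩
  set X := dyadicRound v x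
  rcases eq_or_ne x X with hxX | hne
  · rw [← hxX, sub_self, abs_zero, zero_mul]
    positivity
  have hpos : 0 < ‖x - X‖ := norm_pos_iff.2 (sub_ne_zero.2 hne)
  set L := Real.log (exp 1 + 1 / ‖x - X‖)
  have hL : 1 ≤ L := one_le_log_exp_one_add (by positivity)
  calc |g x - g X| * (v + 1) ≤ c / L * (((Real.log n + 1) / Real.log 2 + 1) * L) := by
        gcongr
        · exact hg x X
        · exact natCast_add_one_le_mul_log hpos (norm_sub_dyadicRound_le v x)
    _ = c * ((Real.log n + 1) / Real.log 2 + 1) := by field_simp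

/-- The logarithmic scale `v + 1 + log (e + |x|)` of the dyadic cube of side `2⁻ᵛ` containing `x`:
the sums over dyadic cubes that occur below have logarithms of at most this order of magnitude. -/
def logScale (v : ℕ) (x : En n) : ℝ := v + 1 + Real.log (exp 1 + ‖x‖)

lemma logScale_pos (v : ℕ) (x : En n) : 0 < logScale v x := by
  have := one_le_log_exp_one_add (norm_nonneg x)
  unfold logScale
  positivity

/-- Exponents with values in a compact subinterval of `(0, ∞)` which, on a dyadic cube, oscillate
by at most a multiple of the inverse of its logarithmic scale. Freezing such an exponent at the
corner of a cube changes the powers of quantities of size `exp (± K * logScale v x)` only by a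
bounded factor. -/
structure SlowExponent (p : En n → ℝ) : Prop where
  measurable : Measurable p
  bounded : ∃ a b, 0 < a ∧ ∀ x, p x ∈ Icc a b
  slow : (fun z : ℕ × En n => p z.2 - p (dyadicRound z.1 z.2)) =O[⊤]
    fun z => (logScale z.1 z.2)⁻¹

lemma isBigO_inv_logScale_iff {f : ℕ × En n → ℝ} :
    (f =O[⊤] fun z => (logScale z.1 z.2)⁻¹) ↔ ∃ K, ∀ v x, |f (v, x)| * logScale v x ≤ K := by
  simp only [isBigO_top, Prod.forall, norm_inv, Real.norm_eq_abs,
    abs_of_pos (logScale_pos _ _), ← div_eq_mul_inv, le_div_iff₀ (logScale_pos _ _)]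

lemma GlobLogHolder.exists_abs_sub_dyadicRound_mul_logScale_le (hg : GlobLogHolder c g) :
    ∃ K, ∀ (v : ℕ) (x : En n), |g x - g (dyadicRound v x)| * logScale v x ≤ K := by
  obtain ⟨K, hK⟩ := hg.1.exists_abs_sub_dyadicRound_mul_le
  obtain ⟨-, g_inf, d, hd, hg⟩ := hg
  refine ⟨K + (d + d * (Real.log (1 + n) + 1)), fun v x => ?_⟩
  set X := dyadicRound v x
  set L := Real.log (exp 1 + ‖x‖)
  set L' := Real.log (exp 1 + ‖X‖)
  have hL : 1 ≤ L := one_le_log_exp_one_add (norm_nonneg x)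
  have hL' : 1 ≤ L' := one_le_log_exp_one_add (norm_nonneg X)
  have hdecay : |g x - g X| ≤ d / L + d / L' :=
    (abs_sub_le (g x) g_inf (g X)).trans
      (add_le_add (hg x) ((abs_sub_comm _ _).trans_le (hg X)))
  have hcompare : L ≤ (Real.log (1 + n) + 1) * L' :=
    log_exp_one_add_le_mul (norm_nonneg X) (norm_nonneg x) n.cast_nonneg
      (norm_le_norm_dyadicRound_add v x)
  have hlog : |g x - g X| * L ≤ d + d * (Real.log (1 + n) + 1) := calc
    |g x - g X| * L ≤ (d / L + d / L') * L := by gcongr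
    _ = d + d / L' * L := by field_simp
    _ ≤ d + d / L' * ((Real.log (1 + n) + 1) * L') := by gcongr
    _ = d + d * (Real.log (1 + n) + 1) := by field_simp
  rw [logScale, mul_add]
  exact add_le_add (hK v x) hlog

lemma GlobLogHolder.slowExponent (hg : GlobLogHolder c g)
    (hbdd : ∃ a b, 0 < a ∧ ∀ x, g x ∈ Icc a b) : SlowExponent g where
  measurable := hg.1.continuous.measurable
  bounded := hbdd
  slow := isBigO_inv_logScale_iff.2 hg.exists_abs_sub_dyadicRound_mul_logScale_le

namespace SlowExponent

lemma pos (hp : SlowExponent p) (x : En n) : 0 < p x := by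
  obtain ⟨a, b, ha, hab⟩ := hp.bounded
  exact ha.trans_le (hab x).1

lemma isBigO_one (hp : SlowExponent p) (φ : ℕ × En n → En n) :
    (fun z => p (φ z)) =O[⊤] fun _ => (1 : ℝ) := by
  obtain ⟨a, b, -, hab⟩ := hp.bounded
  refine isBigO_top.2 ⟨b, fun z => ?_⟩
  rw [norm_one, mul_one, Real.norm_of_nonneg (hp.pos _).le]
  exact (hab _).2

lemma const_mul {a : ℝ} (ha : 0 < a) (hp : SlowExponent p) : SlowExponent fun x => a * p x where
  measurable := hp.measurable.const_mul a
  bounded := by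
    obtain ⟨b, c, hb, hbc⟩ := hp.bounded
    exact ⟨a * b, a * c, mul_pos ha hb, fun x =>
      ⟨mul_le_mul_of_nonneg_left (hbc x).1 ha.le, mul_le_mul_of_nonneg_left (hbc x).2 ha.le⟩⟩
  slow := by simpa only [mul_sub] using hp.slow.const_mul_left a

lemma add (hp : SlowExponent p) (hr : SlowExponent r) : SlowExponent fun x => p x + r x where
  measurable := hp.measurable.add hr.measurable
  bounded := by
    obtain ⟨a, b, ha, hab⟩ := hp.bounded
    obtain ⟨c, d, hc, hcd⟩ := hr.bounded
    exact ⟨a + c, b + d, add_pos ha hc, fun x =>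
      ⟨add_le_add (hab x).1 (hcd x).1, add_le_add (hab x).2 (hcd x).2⟩⟩
  slow := (hp.slow.add hr.slow).congr_left fun z => by ring

lemma inv (hp : SlowExponent p) : SlowExponent fun x => (p x)⁻¹ := by
  have hinv : ∃ a b, 0 < a ∧ ∀ x, (p x)⁻¹ ∈ Icc a b := by
    obtain ⟨a, b, ha, hab⟩ := hp.bounded
    have hb : 0 < b := ha.trans_le ((hab 0).1.trans (hab 0).2)
    exact ⟨b⁻¹, a⁻¹, inv_pos.2 hb, fun x =>
      ⟨inv_anti₀ (hp.pos x) (hab x).2, inv_anti₀ ha (hab x).1⟩⟩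
  obtain ⟨a, b, ha, hab⟩ := hinv
  have hbounded (φ : ℕ × En n → En n) : (fun z => (p (φ z))⁻¹) =O[⊤] fun _ => (1 : ℝ) := by
    refine isBigO_top.2 ⟨b, fun z => ?_⟩
    rw [norm_one, mul_one, Real.norm_of_nonneg (ha.le.trans (hab _).1)]
    exact (hab _).2
  refine ⟨hp.measurable.inv, ⟨a, b, ha, hab⟩, ?_⟩
  have hslow := hp.slow.neg_left.mul
    ((hbounded fun z => z.2).mul (hbounded fun z => dyadicRound z.1 z.2))
  simp only [mul_one] at hslow
  refine hslow.congr_left fun z => ?_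
  have hx := (hp.pos z.2).ne'
  have hX := (hp.pos (dyadicRound z.1 z.2)).ne'
  field_simp
  ring

lemma mul (hp : SlowExponent p) (hr : SlowExponent r) : SlowExponent fun x => p x * r x where
  measurable := hp.measurable.mul hr.measurable
  bounded := by
    obtain ⟨a, b, ha, hab⟩ := hp.bounded
    obtain ⟨c, d, hc, hcd⟩ := hr.bounded
    exact ⟨a * c, b * d, mul_pos ha hc, fun x =>
      ⟨mul_le_mul (hab x).1 (hcd x).1 hc.le (hp.pos x).le,
        mul_le_mul (hab x).2 (hcd x).2 (hr.pos x).le (ha.le.trans ((hab x).1.trans (hab x).2))⟩⟩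
  slow := by
    have hslow := (hp.slow.mul (hr.isBigO_one fun z => z.2)).add
      ((hr.slow.mul (hp.isBigO_one fun z => dyadicRound z.1 z.2)))
    simp only [mul_one] at hslow
    exact hslow.congr_left fun z => by ring

lemma div (hp : SlowExponent p) (hr : SlowExponent r) : SlowExponent fun x => p x / r x := by
  simpa only [div_eq_mul_inv] using hp.mul hr.inv

lemma div_const {a : ℝ} (ha : 0 < a) (hp : SlowExponent p) : SlowExponent fun x => p x / a := by
  simpa only [div_eq_inv_mul] using hp.const_mul (inv_pos.2 ha)

end SlowExponent

end SlowVariation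

section Telescoping

lemma one_sub_le_max_mul_one_sub_rpow {r ε : ℝ} (hr₀ : 0 ≤ r) (hr₁ : r ≤ 1) (hε : 0 < ε) :
    1 - r ≤ max 1 ε⁻¹ * (1 - r ^ ε) := by
  have hpow : 0 ≤ 1 - r ^ ε := sub_nonneg.2 (Real.rpow_le_one hr₀ hr₁ hε.le)
  rcases le_total 1 ε with h | h
  · have hle : r ^ ε ≤ r := Real.rpow_le_self_of_le_one hr₀ hr₁ h
    nlinarith [le_max_left 1 ε⁻¹]
  · have hbernoulli : r ^ ε ≤ 1 + ε * (r - 1) := by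
      simpa using rpow_one_add_le_one_add_mul_self (s := r - 1) (by linarith) hε.le h
    calc 1 - r = ε⁻¹ * (ε * (1 - r)) := by field_simp
      _ ≤ max 1 ε⁻¹ * (1 - r ^ ε) := by
        gcongr
        · exact le_max_right _ _
        · linarith

lemma mul_rpow_sub_one_le_rpow_sub_rpow {b T ε : ℝ} (hb : 0 ≤ b) (hbT : b ≤ T) (hε : 0 < ε) :
    b * T ^ (ε - 1) ≤ max 1 ε⁻¹ * (T ^ ε - (T - b) ^ ε) := by
  rcases (hb.trans hbT).eq_or_lt with rfl | hT
  · obtain rfl : b = 0 := le_antisymm hbT hb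
    simp
  have hr₀ : 0 ≤ 1 - b / T := sub_nonneg.2 (div_le_one_of_le₀ hbT hT.le)
  have hr₁ : 1 - b / T ≤ 1 := sub_le_self _ (by positivity)
  have hpow : (T - b) ^ ε = T ^ ε * (1 - b / T) ^ ε := by
    rw [← Real.mul_rpow hT.le hr₀, mul_sub, mul_one, mul_div_cancel₀ _ hT.ne']
  calc b * T ^ (ε - 1) = T ^ ε * (1 - (1 - b / T)) := by
        rw [Real.rpow_sub_one hT.ne']
        ring
    _ ≤ T ^ ε * (max 1 ε⁻¹ * (1 - (1 - b / T) ^ ε)) := by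
        gcongr
        exact one_sub_le_max_mul_one_sub_rpow hr₀ hr₁ hε
    _ = max 1 ε⁻¹ * (T ^ ε - (T - b) ^ ε) := by
        rw [hpow]
        ring

lemma sum_mul_rpow_partialSum_le {b : ℕ → ℝ} (hb : ∀ v, 0 ≤ b v) {ε : ℝ} (hε : 0 < ε) (N : ℕ) :
    ∑ v ∈ Finset.range N, b v * (∑ u ∈ Finset.range (v + 1), b u) ^ (ε - 1) ≤
      max 1 ε⁻¹ * (∑ v ∈ Finset.range N, b v) ^ ε := by
  induction N with
  | zero => simp [Real.zero_rpow hε.ne']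
  | succ N ih =>
    have hstep := mul_rpow_sub_one_le_rpow_sub_rpow (hb N)
      (Finset.single_le_sum (fun v _ => hb v) (Finset.self_mem_range_succ N)) hε
    rw [Finset.sum_range_succ_sub_top] at hstep
    rw [Finset.sum_range_succ (fun v => b v * _)]
    linarith

lemma rpow_le_exp_mul_rpow {T r ε K : ℝ} (hT : 0 < T) (h : |Real.log T| * |r - ε| ≤ K) :
    T ^ r ≤ exp K * T ^ ε := by
  rw [Real.rpow_def_of_pos hT, Real.rpow_def_of_pos hT, ← Real.exp_add]
  refine Real.exp_le_exp.2 ?_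
  rw [← abs_mul] at h
  linarith [le_abs_self (Real.log T * (r - ε))]

lemma tsum_mul_rpow_partialSum_le {b r : ℕ → ℝ} (hb : ∀ v, 0 < b v) {ε K : ℝ} (hε : 0 < ε)
    (hr : ∀ v, |Real.log (∑ u ∈ Finset.range (v + 1), b u)| * |r v - ε| ≤ K) :
    ∑' v, ENNReal.ofReal (b v * (∑ u ∈ Finset.range (v + 1), b u) ^ (r v - 1)) ≤
      ENNReal.ofReal (exp K * max 1 ε⁻¹) * (∑' v, ENNReal.ofReal (b v)) ^ ε := by
  have hpos (v : ℕ) : 0 < ∑ u ∈ Finset.range (v + 1), b u :=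
    Finset.sum_pos (fun u _ => hb u) ⟨v, Finset.self_mem_range_succ v⟩
  refine ENNReal.tsum_le_of_sum_range_le fun N => ?_
  have hsum : ∑ v ∈ Finset.range N, b v * (∑ u ∈ Finset.range (v + 1), b u) ^ (r v - 1) ≤
      exp K * max 1 ε⁻¹ * (∑ v ∈ Finset.range N, b v) ^ ε := calc
    _ ≤ ∑ v ∈ Finset.range N, exp K * (b v * (∑ u ∈ Finset.range (v + 1), b u) ^ (ε - 1)) := by
        refine Finset.sum_le_sum fun v _ => ?_
        rw [mul_left_comm]
        refine mul_le_mul_of_nonneg_left (rpow_le_exp_mul_rpow (hpos v) ?_) (hb v).le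
        simpa only [sub_sub_sub_cancel_right] using hr v
    _ ≤ _ := by
        rw [← Finset.mul_sum, mul_assoc]
        gcongr
        exact sum_mul_rpow_partialSum_le (fun v => (hb v).le) hε N
  rw [← ENNReal.ofReal_sum_of_nonneg fun v _ =>
    mul_nonneg (hb v).le (Real.rpow_nonneg (hpos v).le _)]
  calc _ ≤ ENNReal.ofReal (exp K * max 1 ε⁻¹ * (∑ v ∈ Finset.range N, b v) ^ ε) :=
        ENNReal.ofReal_le_ofReal hsum
    _ = ENNReal.ofReal (exp K * max 1 ε⁻¹) * (∑ v ∈ Finset.range N, ENNReal.ofReal (b v)) ^ ε := by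
        rw [ENNReal.ofReal_mul (by positivity), ← ENNReal.ofReal_rpow_of_nonneg
          (Finset.sum_nonneg fun v _ => (hb v).le) hε.le,
          ENNReal.ofReal_sum_of_nonneg fun v _ => (hb v).le]
    _ ≤ _ := by
        gcongr
        exact ENNReal.sum_le_tsum _

end Telescoping

section DyadicSums

variable {n : ℕ} {s s₀ : En n → ℝ} {b b' : ℕ → (Fin n → ℤ) → ℝ}

/-- The sum of the values of `b` over the dyadic cubes containing `x`. -/
def dyadicSum (b : ℕ → (Fin n → ℤ) → ℝ) (x : En n) : ℝ≥0∞ :=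
  ∑' v, ENNReal.ofReal (b v (dyadicIndex v x))

/-- The modular of `b` in the sequence space with smoothness `0`, variable integrability `s` and
fine index `1`, normalised in `L^∞`. -/
def dyadicModular (s : En n → ℝ) (b : ℕ → (Fin n → ℤ) → ℝ) : ℝ≥0∞ :=
  ∫⁻ x, dyadicSum b x ^ s x

/-- The sum of the values of `b` over `Q_{v,m}` and its dyadic ancestors. -/
def ancestorSum (b : ℕ → (Fin n → ℤ) → ℝ) (v : ℕ) (m : Fin n → ℤ) : ℝ :=
  ∑ u ∈ Finset.range (v + 1), b u (dyadicIndex u (dyadicCorner v m))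

/-- The factor of `b` in a Calderón product: it is chosen so that, up to freezing the exponent `r`
at the corners of cubes, its dyadic sum telescopes to the power `r` of the dyadic sum of `b`. -/
def dyadicTwist (b : ℕ → (Fin n → ℤ) → ℝ) (r : En n → ℝ) (v : ℕ) (m : Fin n → ℤ) : ℝ :=
  b v m * ancestorSum b v m ^ (r (dyadicCorner v m) - 1)

lemma measurable_comp_dyadicIndex (v : ℕ) (f : (Fin n → ℤ) → ℝ) :
    Measurable fun x : En n => f (dyadicIndex v x) :=
  (measurable_of_countable f).comp (measurable_dyadicIndex v)

lemma measurable_dyadicSum (b : ℕ → (Fin n → ℤ) → ℝ) : Measurable (dyadicSum b) :=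
  Measurable.tsum fun v => (measurable_comp_dyadicIndex v (b v)).ennreal_ofReal

lemma dyadicSum_add (hb : ∀ v m, 0 ≤ b v m) (hb' : ∀ v m, 0 ≤ b' v m) (x : En n) :
    dyadicSum (b + b') x = dyadicSum b x + dyadicSum b' x := by
  simp only [dyadicSum, Pi.add_apply, ENNReal.ofReal_add (hb _ _) (hb' _ _), ENNReal.tsum_add]

lemma dyadicSum_smul {k : ℝ} (hk : 0 ≤ k) (b : ℕ → (Fin n → ℤ) → ℝ) (x : En n) :
    dyadicSum (k • b) x = ENNReal.ofReal k * dyadicSum b x := by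
  simp only [dyadicSum, Pi.smul_apply, smul_eq_mul, ENNReal.ofReal_mul hk, ENNReal.tsum_mul_left]

lemma ancestorSum_dyadicIndex (b : ℕ → (Fin n → ℤ) → ℝ) (v : ℕ) (x : En n) :
    ancestorSum b v (dyadicIndex v x) = ∑ u ∈ Finset.range (v + 1), b u (dyadicIndex u x) :=
  Finset.sum_congr rfl fun u hu => by
    rw [dyadicIndex_dyadicRound (Finset.mem_range_succ_iff.1 hu)]

lemma le_ancestorSum_dyadicIndex (hb : ∀ v m, 0 ≤ b v m) {u v : ℕ} (huv : u ≤ v) (x : En n) :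
    b u (dyadicIndex u x) ≤ ancestorSum b v (dyadicIndex v x) := by
  rw [ancestorSum_dyadicIndex]
  exact Finset.single_le_sum (f := fun u => b u (dyadicIndex u x)) (fun _ _ => hb _ _)
    (Finset.mem_range_succ_iff.2 huv)

lemma ofReal_ancestorSum_le_dyadicSum (hb : ∀ v m, 0 ≤ b v m) (v : ℕ) (x : En n) :
    ENNReal.ofReal (ancestorSum b v (dyadicIndex v x)) ≤ dyadicSum b x := by
  rw [ancestorSum_dyadicIndex, ENNReal.ofReal_sum_of_nonneg fun _ _ => hb _ _]
  exact ENNReal.sum_le_tsum _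

lemma ancestorSum_pos (hb : ∀ v m, 0 < b v m) (v : ℕ) (m : Fin n → ℤ) : 0 < ancestorSum b v m :=
  Finset.sum_pos (fun _ _ => hb _ _) ⟨v, Finset.self_mem_range_succ v⟩

lemma exists_modular_smul_le_one {a : ℝ} (ha : 0 < a) (has : ∀ x, a ≤ s x) (C : ℝ) :
    ∃ δ : ℝ, 0 < δ ∧ ∀ F : En n → ℝ≥0∞, ∫⁻ x, F x ^ s x ≤ ENNReal.ofReal C →
      ∫⁻ x, (ENNReal.ofReal δ * F x) ^ s x ≤ 1 := by
  set B := max 1 C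
  have hB : 1 ≤ B := le_max_left _ _
  have hδ : B ^ (-a⁻¹) ≤ 1 :=
    Real.rpow_le_one_of_one_le_of_nonpos hB (neg_nonpos.2 (inv_pos.2 ha).le)
  refine ⟨B ^ (-a⁻¹), by positivity, fun F hF => ?_⟩
  have hpow (x : En n) : ENNReal.ofReal (B ^ (-a⁻¹)) ^ s x ≤ ENNReal.ofReal B⁻¹ := calc
    _ ≤ ENNReal.ofReal (B ^ (-a⁻¹)) ^ a :=
        ENNReal.rpow_le_rpow_of_exponent_ge (ENNReal.ofReal_le_one.2 hδ) (has x)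
    _ = ENNReal.ofReal B⁻¹ := by
        rw [ENNReal.ofReal_rpow_of_nonneg (by positivity) ha.le, ← Real.rpow_mul (by positivity),
          neg_mul, inv_mul_cancel₀ ha.ne', Real.rpow_neg_one]
  calc ∫⁻ x, (ENNReal.ofReal (B ^ (-a⁻¹)) * F x) ^ s x
      ≤ ∫⁻ x, ENNReal.ofReal B⁻¹ * F x ^ s x := by
        gcongr with x
        rw [ENNReal.mul_rpow_of_nonneg _ _ (ha.le.trans (has x))]
        gcongr
        exact hpow x
    _ ≤ ENNReal.ofReal B⁻¹ * ENNReal.ofReal B := by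
        rw [lintegral_const_mul' _ _ ENNReal.ofReal_ne_top]
        gcongr
        exact hF.trans (ENNReal.ofReal_le_ofReal (le_max_right _ _))
    _ = 1 := by
        rw [← ENNReal.ofReal_mul (by positivity), inv_mul_cancel₀ (by positivity),
          ENNReal.ofReal_one]

lemma exists_dyadicSum_dyadicTwist_le {r : En n → ℝ} (hr : SlowExponent r) {K : ℝ} (hK : 0 ≤ K) :
    ∃ D : ℝ, 0 < D ∧ ∀ b : ℕ → (Fin n → ℤ) → ℝ, (∀ v m, 0 < b v m) →
      (∀ v x, |Real.log (ancestorSum b v (dyadicIndex v x))| ≤ K * logScale v x) →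
      ∀ x, dyadicSum (dyadicTwist b r) x ≤ ENNReal.ofReal D * dyadicSum b x ^ r x := by
  obtain ⟨Kr, hKr⟩ := isBigO_inv_logScale_iff.1 hr.slow
  obtain ⟨a, _, ha, har⟩ := hr.bounded
  refine ⟨exp (K * Kr) * max 1 a⁻¹, by positivity, fun b hb hlog x => ?_⟩
  have hfreeze (v : ℕ) : |Real.log (ancestorSum b v (dyadicIndex v x))| *
      |r (dyadicRound v x) - r x| ≤ K * Kr := calc
    _ ≤ K * logScale v x * |r x - r (dyadicRound v x)| := by
        rw [abs_sub_comm]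
        exact mul_le_mul_of_nonneg_right (hlog v x) (abs_nonneg _)
    _ = K * (|r x - r (dyadicRound v x)| * logScale v x) := by ring
    _ ≤ K * Kr := mul_le_mul_of_nonneg_left (hKr v x) hK
  simp only [dyadicSum, dyadicTwist, ancestorSum_dyadicIndex] at hfreeze ⊢
  refine (tsum_mul_rpow_partialSum_le (fun v => hb v _) (hr.pos x) hfreeze).trans ?_
  gcongr
  exact (har x).1

lemma exists_dyadicModular_smul_dyadicTwist_le_one (hs : SlowExponent s) (hs₀ : SlowExponent s₀)
    {K : ℝ} (hK : 0 ≤ K) (C : ℝ) :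
    ∃ κ : ℝ, 0 < κ ∧ ∀ b : ℕ → (Fin n → ℤ) → ℝ, (∀ v m, 0 < b v m) →
      (∀ v x, |Real.log (ancestorSum b v (dyadicIndex v x))| ≤ K * logScale v x) →
      dyadicModular s b ≤ ENNReal.ofReal C →
      dyadicModular s₀ (κ • dyadicTwist b fun x => s x / s₀ x) ≤ 1 := by
  obtain ⟨D, hD, htwist⟩ := exists_dyadicSum_dyadicTwist_le (hs.div hs₀) hK
  obtain ⟨a, _, ha, has₀⟩ := hs₀.bounded
  obtain ⟨δ, hδ, hscale⟩ := exists_modular_smul_le_one ha (fun x => (has₀ x).1) C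
  refine ⟨δ / D, by positivity, fun b hb hlog hmod => ?_⟩
  have hsum (x : En n) : dyadicSum ((δ / D) • dyadicTwist b fun x => s x / s₀ x) x ≤
      ENNReal.ofReal δ * dyadicSum b x ^ (s x / s₀ x) := calc
    _ ≤ ENNReal.ofReal (δ / D) * (ENNReal.ofReal D * dyadicSum b x ^ (s x / s₀ x)) := by
        rw [dyadicSum_smul (by positivity)]
        gcongr
        exact htwist b hb hlog x
    _ = _ := by
        rw [← mul_assoc, ← ENNReal.ofReal_mul (by positivity), div_mul_cancel₀ _ hD.ne']
  calc dyadicModular s₀ ((δ / D) • dyadicTwist b fun x => s x / s₀ x)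
      ≤ ∫⁻ x, (ENNReal.ofReal δ * dyadicSum b x ^ (s x / s₀ x)) ^ s₀ x :=
        lintegral_mono fun x => ENNReal.rpow_le_rpow (hsum x) (hs₀.pos x).le
    _ ≤ 1 := hscale _ <| by
        simpa only [← ENNReal.rpow_mul, div_mul_cancel₀ _ (hs₀.pos _).ne', dyadicModular] using hmod

/-- A positive sequence which has finite dyadic modular for large `N`, and whose values have
logarithms of the order of the logarithmic scale of the cubes. -/
def dyadicDecay (N : ℝ) (v : ℕ) (m : Fin n → ℤ) : ℝ := (1 / 2) ^ v * (1 + ‖dyadicCorner v m‖) ^ (-N)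

lemma dyadicDecay_pos (N : ℝ) (v : ℕ) (m : Fin n → ℤ) : 0 < dyadicDecay N v m := by
  unfold dyadicDecay
  positivity

lemma dyadicSum_dyadicDecay_le {N : ℝ} (hN : 0 ≤ N) (x : En n) :
    dyadicSum (dyadicDecay N) x ≤ ENNReal.ofReal (2 * (1 + n) ^ N * (1 + ‖x‖) ^ (-N)) := by
  have hcube (v : ℕ) : dyadicDecay N v (dyadicIndex v x) ≤
      (1 / 2) ^ v * ((1 + n) ^ N * (1 + ‖x‖) ^ (-N)) := by
    have hle : 1 + ‖x‖ ≤ (1 + n) * (1 + ‖dyadicRound v x‖) := by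
      nlinarith [norm_le_norm_dyadicRound_add v x, norm_nonneg (dyadicRound v x),
        (Nat.cast_nonneg n : (0 : ℝ) ≤ n)]
    unfold dyadicDecay
    gcongr
    rw [Real.rpow_neg (by positivity), Real.rpow_neg (by positivity), ← div_eq_mul_inv,
      inv_le_comm₀ (by positivity) (by positivity), inv_div, div_le_iff₀ (by positivity),
      mul_comm, ← Real.mul_rpow (by positivity) (by positivity)]
    exact Real.rpow_le_rpow (by positivity) hle hN
  calc dyadicSum (dyadicDecay N) x
      ≤ ∑' v : ℕ, ENNReal.ofReal ((1 / 2) ^ v * ((1 + n) ^ N * (1 + ‖x‖) ^ (-N))) :=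
        ENNReal.tsum_le_tsum fun v => ENNReal.ofReal_le_ofReal (hcube v)
    _ = ENNReal.ofReal (2 * (1 + n) ^ N * (1 + ‖x‖) ^ (-N)) := by
        rw [← ENNReal.ofReal_tsum_of_nonneg (fun v => by positivity)
          (summable_geometric_two.mul_right _), tsum_mul_right, tsum_geometric_two, mul_assoc]

lemma dyadicModular_dyadicDecay_ne_top {a c N : ℝ} (ha : 0 < a) (hs : ∀ x, s x ∈ Icc a c)
    (hN : n + 1 ≤ N * a) : dyadicModular s (dyadicDecay N) ≠ ∞ := by
  have hN₀ : 0 ≤ N := by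
    by_contra! h
    nlinarith [(Nat.cast_nonneg n : (0 : ℝ) ≤ n)]
  have hc (x : En n) : 0 ≤ s x := ha.le.trans (hs x).1
  set A := max 1 (ENNReal.ofReal (2 * (1 + n) ^ N))
  have hpoint (x : En n) : dyadicSum (dyadicDecay N) x ^ s x ≤
      A ^ c * ENNReal.ofReal ((1 + ‖x‖) ^ (-(n + 1 : ℝ))) := calc
    _ ≤ ENNReal.ofReal (2 * (1 + n) ^ N * (1 + ‖x‖) ^ (-N)) ^ s x :=
        ENNReal.rpow_le_rpow (dyadicSum_dyadicDecay_le hN₀ x) (hc x)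
    _ = ENNReal.ofReal (2 * (1 + n) ^ N) ^ s x * ENNReal.ofReal ((1 + ‖x‖) ^ (-N * s x)) := by
        rw [ENNReal.ofReal_mul (by positivity), ENNReal.mul_rpow_of_nonneg _ _ (hc x),
          Real.rpow_mul (by positivity), ← ENNReal.ofReal_rpow_of_nonneg (by positivity) (hc x)]
    _ ≤ A ^ c * ENNReal.ofReal ((1 + ‖x‖) ^ (-(n + 1 : ℝ))) := by
        gcongr ?_ * ENNReal.ofReal ?_
        · exact (ENNReal.rpow_le_rpow (le_max_right _ _) (hc x)).trans
            (ENNReal.rpow_le_rpow_of_exponent_le (le_max_left _ _) (hs x).2)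
        · refine Real.rpow_le_rpow_of_exponent_le (le_add_of_nonneg_right (norm_nonneg x)) ?_
          linarith [mul_le_mul_of_nonneg_left (hs x).1 hN₀]
  have hA : A ^ c ≠ ∞ := ENNReal.rpow_ne_top_of_nonneg ((hc 0).trans (hs 0).2)
    (max_lt ENNReal.one_lt_top ENNReal.ofReal_lt_top).ne
  have hintegral : ∫⁻ x : En n, ENNReal.ofReal ((1 + ‖x‖) ^ (-(n + 1 : ℝ))) ≠ ∞ :=
    (finite_integral_one_add_norm (by simp)).ne
  refine ne_top_of_le_ne_top (ENNReal.mul_ne_top hA hintegral) ?_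
  exact (lintegral_mono hpoint).trans_eq (lintegral_const_mul' _ _ hA)

end DyadicSums

section DyadicFactorization

variable {n : ℕ} {s s₀ s₁ : En n → ℝ} {b : ℕ → (Fin n → ℤ) → ℝ}

lemma add_rpow_le_two_rpow_mul (x y : ℝ≥0∞) {r : ℝ} (hr : 0 ≤ r) :
    (x + y) ^ r ≤ 2 ^ r * (x ^ r + y ^ r) := calc
  (x + y) ^ r ≤ (2 * max x y) ^ r := by
      rw [two_mul]
      gcongr
      exacts [le_max_left _ _, le_max_right _ _]
  _ = 2 ^ r * max (x ^ r) (y ^ r) := by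
      rw [ENNReal.mul_rpow_of_nonneg _ _ hr, (ENNReal.monotone_rpow_of_nonneg hr).map_max]
  _ ≤ 2 ^ r * (x ^ r + y ^ r) := by
      gcongr
      exact max_le_add_of_nonneg zero_le zero_le

lemma exists_dyadicModular_add_dyadicDecay_le {a c N : ℝ} (hsm : Measurable s) (ha : 0 < a)
    (hs : ∀ x, s x ∈ Icc a c) (hN : n + 1 ≤ N * a) :
    ∃ C : ℝ, ∀ b : ℕ → (Fin n → ℤ) → ℝ, (∀ v m, 0 ≤ b v m) → dyadicModular s b ≤ 1 →
      dyadicModular s (b + dyadicDecay N) ≤ ENNReal.ofReal C := by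
  have htwo : (2 : ℝ≥0∞) ^ c ≠ ∞ :=
    ENNReal.rpow_ne_top_of_nonneg (ha.le.trans ((hs 0).1.trans (hs 0).2)) ENNReal.ofNat_ne_top
  have hdecay : (2 : ℝ≥0∞) ^ c * (1 + dyadicModular s (dyadicDecay N)) ≠ ∞ :=
    ENNReal.mul_ne_top htwo
      (ENNReal.add_ne_top.2 ⟨ENNReal.one_ne_top, dyadicModular_dyadicDecay_ne_top ha hs hN⟩)
  refine ⟨_, fun b hb hmod => le_trans ?_ (ENNReal.ofReal_toReal hdecay).ge⟩
  calc dyadicModular s (b + dyadicDecay N)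
      ≤ ∫⁻ x, 2 ^ c * (dyadicSum b x ^ s x + dyadicSum (dyadicDecay N) x ^ s x) := by
        refine lintegral_mono fun x => ?_
        rw [dyadicSum_add hb fun v m => (dyadicDecay_pos N v m).le]
        refine (add_rpow_le_two_rpow_mul _ _ (ha.le.trans (hs x).1)).trans ?_
        gcongr
        exacts [one_le_two, (hs x).2]
    _ = 2 ^ c * (dyadicModular s b + dyadicModular s (dyadicDecay N)) := by
        rw [lintegral_const_mul' _ _ htwo, lintegral_add_left ((measurable_dyadicSum b).pow hsm)]
        rfl
    _ ≤ 2 ^ c * (1 + dyadicModular s (dyadicDecay N)) := by gcongr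

lemma ancestorSum_rpow_le {a C : ℝ} (has : ∀ x, a ≤ s x) (ha : 0 < a) (hb : ∀ v m, 0 ≤ b v m)
    (hmod : dyadicModular s b ≤ ENNReal.ofReal C) {v : ℕ} {m : Fin n → ℤ}
    (hT : 1 ≤ ancestorSum b v m) : ancestorSum b v m ^ a ≤ max C 0 * (2 ^ v) ^ n := by
  have hcube : ∀ y ∈ dyadicCube n v m,
      ENNReal.ofReal (ancestorSum b v m ^ a) ≤ dyadicSum b y ^ s y := fun y hy => calc
    _ = ENNReal.ofReal (ancestorSum b v m) ^ a :=
        (ENNReal.ofReal_rpow_of_nonneg (by positivity) ha.le).symm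
    _ ≤ ENNReal.ofReal (ancestorSum b v m) ^ s y :=
        ENNReal.rpow_le_rpow_of_exponent_le (ENNReal.one_le_ofReal.2 hT) (has y)
    _ ≤ dyadicSum b y ^ s y := by
        refine ENNReal.rpow_le_rpow ?_ (ha.le.trans (has y))
        rw [← mem_dyadicCube_iff.1 hy]
        exact ofReal_ancestorSum_le_dyadicSum hb v y
  have hvolume : ENNReal.ofReal (ancestorSum b v m ^ a) * ENNReal.ofReal ((1 / 2 ^ v) ^ n) ≤
      ENNReal.ofReal C := calc
    _ = ∫⁻ _ in dyadicCube n v m, ENNReal.ofReal (ancestorSum b v m ^ a) := by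
        rw [setLIntegral_const, volume_dyadicCube]
    _ ≤ ∫⁻ y in dyadicCube n v m, dyadicSum b y ^ s y :=
        setLIntegral_mono' (measurableSet_dyadicCube v m) hcube
    _ ≤ ENNReal.ofReal C := (setLIntegral_le_lintegral _ _).trans hmod
  rw [← ENNReal.ofReal_mul (by positivity), ENNReal.ofReal_le_ofReal_iff'] at hvolume
  have hreal : ancestorSum b v m ^ a * (1 / 2 ^ v) ^ n ≤ max C 0 :=
    hvolume.elim (fun h => h.trans (le_max_left _ _)) fun h => h.trans (le_max_right _ _)
  rwa [one_div, inv_pow, ← div_eq_mul_inv, div_le_iff₀ (by positivity)] at hreal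

lemma log_ancestorSum_le {a C : ℝ} (has : ∀ x, a ≤ s x) (ha : 0 < a) (hb : ∀ v m, 0 < b v m)
    (hC : 1 ≤ C) (hmod : dyadicModular s b ≤ ENNReal.ofReal C) (v : ℕ) (m : Fin n → ℤ) :
    Real.log (ancestorSum b v m) ≤ (Real.log C + n) / a * (v + 1) := by
  have hlogC : 0 ≤ Real.log C := Real.log_nonneg hC
  have hT := ancestorSum_pos hb v m
  rcases le_total (ancestorSum b v m) 1 with h1 | h1
  · exact (Real.log_nonpos hT.le h1).trans (by positivity)
  have hlog := Real.log_le_log (by positivity)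
    (ancestorSum_rpow_le has ha (fun v m => (hb v m).le) hmod h1)
  rw [max_eq_left (by positivity), Real.log_mul (by positivity) (by positivity), Real.log_pow,
    Real.log_pow, Real.log_rpow hT] at hlog
  have hv : n * (v * Real.log 2) ≤ n * (v : ℝ) := by
    gcongr
    exact mul_le_of_le_one_right v.cast_nonneg (Real.log_two_lt_d9.le.trans (by norm_num))
  rw [div_mul_eq_mul_div, le_div_iff₀ ha]
  nlinarith [mul_nonneg hlogC (Nat.cast_nonneg v : (0 : ℝ) ≤ v), (Nat.cast_nonneg n : (0 : ℝ) ≤ n)]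

lemma neg_mul_log_le_log_ancestorSum {N : ℝ} (hN : 0 ≤ N)
    (hb : ∀ v m, dyadicDecay N v m ≤ b v m) (v : ℕ) (x : En n) :
    -(N * ((Real.log (1 + n) + 1) * Real.log (exp 1 + ‖x‖))) ≤
      Real.log (ancestorSum b v (dyadicIndex v x)) := by
  set X := dyadicRound 0 x
  have hX : Real.log (1 + ‖X‖) ≤ (Real.log (1 + n) + 1) * Real.log (exp 1 + ‖x‖) := calc
    _ ≤ Real.log (exp 1 + ‖X‖) := by
        gcongr
        exact Real.one_le_exp zero_le_one
    _ ≤ _ := log_exp_one_add_le_mul (norm_nonneg x) (norm_nonneg X) n.cast_nonneg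
        (norm_dyadicRound_le_norm_add 0 x)
  have hT : (1 + ‖X‖) ^ (-N) ≤ ancestorSum b v (dyadicIndex v x) := calc
    _ = dyadicDecay N 0 (dyadicIndex 0 x) := by rw [dyadicDecay, pow_zero, one_mul]
    _ ≤ b 0 (dyadicIndex 0 x) := hb _ _
    _ ≤ _ := le_ancestorSum_dyadicIndex
        (fun v m => (dyadicDecay_pos N v m).le.trans (hb v m)) v.zero_le x
  have hlog := Real.log_le_log (by positivity) hT
  rw [Real.log_rpow (by positivity)] at hlog
  linarith [mul_le_mul_of_nonneg_left hX hN]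

lemma exists_abs_log_ancestorSum_le {a N C : ℝ} (has : ∀ x, a ≤ s x) (ha : 0 < a) (hN : 0 ≤ N)
    (hC : 1 ≤ C) :
    ∃ K, 0 ≤ K ∧ ∀ b : ℕ → (Fin n → ℤ) → ℝ, (∀ v m, dyadicDecay N v m ≤ b v m) →
      dyadicModular s b ≤ ENNReal.ofReal C →
      ∀ v x, |Real.log (ancestorSum b v (dyadicIndex v x))| ≤ K * logScale v x := by
  have hlogC : 0 ≤ Real.log C := Real.log_nonneg hC
  have hlogn : 0 ≤ Real.log (1 + n) := Real.log_nonneg (by simp)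
  set Ku := (Real.log C + n) / a
  set Kl := N * (Real.log (1 + n) + 1)
  have hKu : 0 ≤ Ku := by positivity
  have hKl : 0 ≤ Kl := by positivity
  refine ⟨Ku + Kl, add_nonneg hKu hKl, fun b hb hmod v x => ?_⟩
  have hlog := one_le_log_exp_one_add (norm_nonneg x)
  have hv : (0 : ℝ) ≤ v := v.cast_nonneg
  have hupper := log_ancestorSum_le has ha (fun v m => (dyadicDecay_pos N v m).trans_le (hb v m))
    hC hmod v (dyadicIndex v x)
  have hlower := neg_mul_log_le_log_ancestorSum hN hb v x
  rw [← mul_assoc] at hlower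
  rw [logScale, abs_le]
  constructor <;> nlinarith [mul_nonneg hKl hv, mul_nonneg hKu hv]

-- The powers of the ancestor sums cancel since `t * s / s₀ + t' * s / s₁ = 1`.
lemma dyadicTwist_rpow_mul_dyadicTwist_rpow {t t' : ℝ} (ht : t + t' = 1)
    (hs : ∀ x, s x ≠ 0) (hrel : ∀ x, (s x)⁻¹ = t / s₀ x + t' / s₁ x) (hb : ∀ v m, 0 < b v m)
    (v : ℕ) (m : Fin n → ℤ) :
    dyadicTwist b (fun x => s x / s₀ x) v m ^ t * dyadicTwist b (fun x => s x / s₁ x) v m ^ t' =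
      b v m := by
  set X := dyadicCorner v m
  have hT := ancestorSum_pos hb v m
  have hexp : (s X / s₀ X - 1) * t + (s X / s₁ X - 1) * t' = 0 := by
    have hX : s X * (t / s₀ X + t' / s₁ X) = 1 := by rw [← hrel X, mul_inv_cancel₀ (hs X)]
    linear_combination hX - ht
  calc _ = (b v m ^ t * b v m ^ t') *
        (ancestorSum b v m ^ ((s X / s₀ X - 1) * t) *
          ancestorSum b v m ^ ((s X / s₁ X - 1) * t')) := by
        rw [dyadicTwist, dyadicTwist, Real.mul_rpow (hb v m).le (by positivity),
          Real.mul_rpow (hb v m).le (by positivity), ← Real.rpow_mul hT.le, ← Real.rpow_mul hT.le]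
        ring
    _ = b v m := by
        rw [← Real.rpow_add (hb v m), ← Real.rpow_add hT, ht, hexp, Real.rpow_one, Real.rpow_zero,
          mul_one]

theorem exists_dyadicModular_factorization (hs : SlowExponent s) (hs₀ : SlowExponent s₀)
    (hs₁ : SlowExponent s₁) {t t' : ℝ} (ht : t + t' = 1)
    (hrel : ∀ x, (s x)⁻¹ = t / s₀ x + t' / s₁ x) :
    ∃ C : ℝ, 0 < C ∧ ∀ b : ℕ → (Fin n → ℤ) → ℝ, (∀ v m, 0 ≤ b v m) → dyadicModular s b ≤ 1 →
      ∃ b₀ b₁ : ℕ → (Fin n → ℤ) → ℝ, (∀ v m, 0 ≤ b₀ v m) ∧ (∀ v m, 0 ≤ b₁ v m) ∧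
        dyadicModular s₀ b₀ ≤ 1 ∧ dyadicModular s₁ b₁ ≤ 1 ∧
        ∀ v m, b v m ≤ C * (b₀ v m ^ t * b₁ v m ^ t') := by
  obtain ⟨a, c, ha, has⟩ := hs.bounded
  set N := (n + 1) / a
  have hN : (n + 1 : ℝ) ≤ N * a := (div_mul_cancel₀ _ ha.ne').ge
  obtain ⟨C, hC⟩ := exists_dyadicModular_add_dyadicDecay_le hs.measurable ha has hN
  replace hC := fun b hb hmod => (hC b hb hmod).trans (ENNReal.ofReal_le_ofReal (le_max_right 1 C))
  obtain ⟨K, hK, hlog⟩ := exists_abs_log_ancestorSum_le (N := N) (fun x => (has x).1) ha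
    (by positivity) (le_max_left 1 C)
  obtain ⟨κ₀, hκ₀, htwist₀⟩ := exists_dyadicModular_smul_dyadicTwist_le_one hs hs₀ hK (max 1 C)
  obtain ⟨κ₁, hκ₁, htwist₁⟩ := exists_dyadicModular_smul_dyadicTwist_le_one hs hs₁ hK (max 1 C)
  refine ⟨(κ₀ ^ t * κ₁ ^ t')⁻¹, by positivity, fun b hb hmod => ?_⟩
  set b' := b + dyadicDecay N
  have hmod' : dyadicModular s b' ≤ ENNReal.ofReal (max 1 C) := hC b hb hmod
  have hdecay (v : ℕ) (m : Fin n → ℤ) : dyadicDecay N v m ≤ b' v m :=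
    le_add_of_nonneg_left (hb v m)
  have hb' (v : ℕ) (m : Fin n → ℤ) : 0 < b' v m := (dyadicDecay_pos N v m).trans_le (hdecay v m)
  have htwist_pos (r : En n → ℝ) (v : ℕ) (m : Fin n → ℤ) : 0 ≤ dyadicTwist b' r v m :=
    mul_nonneg (hb' v m).le (Real.rpow_nonneg (ancestorSum_pos hb' v m).le _)
  refine ⟨κ₀ • dyadicTwist b' fun x => s x / s₀ x, κ₁ • dyadicTwist b' fun x => s x / s₁ x,
    fun v m => mul_nonneg hκ₀.le (htwist_pos _ v m),
    fun v m => mul_nonneg hκ₁.le (htwist_pos _ v m),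
    htwist₀ b' hb' (hlog b' hdecay hmod') hmod', htwist₁ b' hb' (hlog b' hdecay hmod') hmod',
    fun v m => ?_⟩
  simp only [Pi.smul_apply, smul_eq_mul]
  rw [Real.mul_rpow hκ₀.le (htwist_pos _ v m), Real.mul_rpow hκ₁.le (htwist_pos _ v m),
    mul_mul_mul_comm, inv_mul_cancel_left₀ (by positivity),
    dyadicTwist_rpow_mul_dyadicTwist_rpow ht (fun x => (hs.pos x).ne') hrel hb']
  exact le_add_of_nonneg_right (dyadicDecay_pos N v m).le

end DyadicFactorization

section SequenceSpaces

variable {n : ℕ} {α p : En n → ℝ} {c q : ℝ}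

/-- The `ℓ_q` norm of the terms defining `seqNorm`, at a point `x`; it is the function whose
Luxemburg norm is the norm of `lam` in the sequence space with constant fine index `q`. -/
def squareFun (α : En n → ℝ) (q : ℝ) (lam : ℕ → (Fin n → ℤ) → ℂ) (x : En n) : ℝ≥0∞ :=
  (∑' v : ℕ, ENNReal.ofReal
    (2 ^ ((v : ℝ) * (α x + n / 2)) * ‖lam v (dyadicIndex v x)‖) ^ q) ^ (1 / q)

/-- The weight `2^{v(α + n/2)}` of the sequence spaces, with `α` frozen at the corner of the dyadic
cube `Q_{v,m}`. -/
def cornerWeight (α : En n → ℝ) (v : ℕ) (m : Fin n → ℤ) : ℝ :=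
  2 ^ ((v : ℝ) * (α (dyadicCorner v m) + n / 2))

/-- The power trick: the coefficients on which a sequence space with fine index `q` becomes one
with smoothness `0` and fine index `1`. -/
def flattenCoeff (α : En n → ℝ) (q : ℝ) (lam : ℕ → (Fin n → ℤ) → ℂ) (v : ℕ) (m : Fin n → ℤ) : ℝ :=
  (cornerWeight α v m * ‖lam v m‖) ^ q

/-- The nonnegative coefficients that `flattenCoeff` sends to `b`. -/
def unflattenCoeff (α : En n → ℝ) (q : ℝ) (b : ℕ → (Fin n → ℤ) → ℝ) (v : ℕ) (m : Fin n → ℤ) : ℝ :=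
  b v m ^ (1 / q) / cornerWeight α v m

lemma seqNorm_eq_luxNorm_squareFun (α p : En n → ℝ) (q : ℝ) (lam : ℕ → (Fin n → ℤ) → ℂ) :
    seqNorm α p (fun _ => q) lam = luxNorm p (squareFun α q lam) := by
  have hterm (v : ℕ) (x : En n) : ∑' m, ENNReal.ofReal (2 ^ ((v : ℝ) * (α x + n / 2)) * ‖lam v m‖) *
      (dyadicCube n v m).indicator (fun _ => 1) x =
      ENNReal.ofReal (2 ^ ((v : ℝ) * (α x + n / 2)) * ‖lam v (dyadicIndex v x)‖) := by
    rw [tsum_eq_single (dyadicIndex v x) fun m hm => by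
        rw [indicator_of_notMem fun h => hm (mem_dyadicCube_iff.1 h).symm, mul_zero],
      indicator_of_mem (mem_dyadicCube_iff.2 rfl), mul_one]
  simp only [seqNorm, mixedNorm, hterm]
  rfl

lemma measurable_squareFun (hα : Measurable α) (q : ℝ) (lam : ℕ → (Fin n → ℤ) → ℂ) :
    Measurable (squareFun α q lam) := by
  refine (Measurable.tsum fun v => ?_).pow_const _
  have hweight : Measurable fun x => (2 : ℝ) ^ ((v : ℝ) * (α x + n / 2)) := by fun_prop
  exact (hweight.mul (measurable_comp_dyadicIndex v fun m => ‖lam v m‖)).ennreal_ofReal.pow_const q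

lemma cornerWeight_pos (α : En n → ℝ) (v : ℕ) (m : Fin n → ℤ) : 0 < cornerWeight α v m :=
  rpow_pos_of_pos two_pos _

lemma cornerWeight_eq_mul {α₀ α₁ : En n → ℝ} {θ : ℝ}
    (hα : ∀ x, α x = (1 - θ) * α₀ x + θ * α₁ x) (v : ℕ) (m : Fin n → ℤ) :
    cornerWeight α v m = cornerWeight α₀ v m ^ (1 - θ) * cornerWeight α₁ v m ^ θ := by
  simp only [cornerWeight, hα, ← rpow_mul zero_le_two, ← rpow_add two_pos]
  ring_nf

lemma flattenCoeff_nonneg (α : En n → ℝ) (q : ℝ) (lam : ℕ → (Fin n → ℤ) → ℂ) (v : ℕ)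
    (m : Fin n → ℤ) : 0 ≤ flattenCoeff α q lam v m :=
  rpow_nonneg (mul_nonneg (cornerWeight_pos α v m).le (norm_nonneg _)) q

lemma unflattenCoeff_nonneg {b : ℕ → (Fin n → ℤ) → ℝ} (hb : ∀ v m, 0 ≤ b v m) (v : ℕ)
    (m : Fin n → ℤ) : 0 ≤ unflattenCoeff α q b v m :=
  div_nonneg (rpow_nonneg (hb v m) _) (cornerWeight_pos α v m).le

lemma flattenCoeff_smul_unflattenCoeff {k : ℝ} (hk : 0 ≤ k) (hq : 0 < q)
    {b : ℕ → (Fin n → ℤ) → ℝ} (hb : ∀ v m, 0 ≤ b v m) :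
    flattenCoeff α q (fun v m => (k * unflattenCoeff α q b v m : ℝ)) = k ^ q • b := by
  funext v m
  have hcancel : cornerWeight α v m * (k * unflattenCoeff α q b v m) = k * b v m ^ (1 / q) := by
    rw [unflattenCoeff]
    field_simp [(cornerWeight_pos α v m).ne']
  rw [flattenCoeff, Complex.norm_real,
    Real.norm_of_nonneg (mul_nonneg hk (unflattenCoeff_nonneg hb v m)), hcancel,
    mul_rpow hk (rpow_nonneg (hb v m) _), ← rpow_mul (hb v m), one_div_mul_cancel hq.ne',
    Real.rpow_one]
  rfl

lemma LocLogHolder.exists_cornerWeight_equiv (hα : LocLogHolder c α) :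
    ∃ A : ℝ, 0 < A ∧ ∀ (v : ℕ) (x : En n),
      cornerWeight α v (dyadicIndex v x) ≤ A * 2 ^ ((v : ℝ) * (α x + n / 2)) ∧
      2 ^ ((v : ℝ) * (α x + n / 2)) ≤ A * cornerWeight α v (dyadicIndex v x) := by
  obtain ⟨K, hK⟩ := hα.exists_abs_sub_dyadicRound_mul_le
  refine ⟨2 ^ K, by positivity, fun v x => ?_⟩
  have hdiff : |(v : ℝ) * (α x - α (dyadicRound v x))| ≤ K := by
    rw [abs_mul, Nat.abs_cast, mul_comm]
    exact (by gcongr; linarith : _ ≤ |α x - α (dyadicRound v x)| * ((v : ℝ) + 1)).trans (hK v x)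
  obtain ⟨hlow, hupp⟩ := abs_le.1 hdiff
  simp only [cornerWeight, ← rpow_add two_pos]
  constructor <;> refine rpow_le_rpow_of_exponent_le one_le_two ?_ <;> linarith

lemma LocLogHolder.exists_squareFun_equiv (hα : LocLogHolder c α) :
    ∃ A : ℝ, 0 < A ∧ ∀ q, 0 < q → ∀ (lam : ℕ → (Fin n → ℤ) → ℂ) (x : En n),
      dyadicSum (flattenCoeff α q lam) x ^ (1 / q) ≤ ENNReal.ofReal A * squareFun α q lam x ∧
      squareFun α q lam x ≤ ENNReal.ofReal A * dyadicSum (flattenCoeff α q lam) x ^ (1 / q) := by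
  obtain ⟨A, hA, hweight⟩ := hα.exists_cornerWeight_equiv
  refine ⟨A, hA, fun q hq lam x => ?_⟩
  have hcompare {f g : ℕ → ℝ} (hfg : ∀ v, f v ≤ A * g v) :
      (∑' v, ENNReal.ofReal (f v * ‖lam v (dyadicIndex v x)‖) ^ q) ^ (1 / q) ≤
        ENNReal.ofReal A *
          (∑' v, ENNReal.ofReal (g v * ‖lam v (dyadicIndex v x)‖) ^ q) ^ (1 / q) := calc
    _ ≤ (∑' v, ENNReal.ofReal A ^ q *
          ENNReal.ofReal (g v * ‖lam v (dyadicIndex v x)‖) ^ q) ^ (1 / q) := by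
      gcongr with v
      rw [← ENNReal.mul_rpow_of_nonneg _ _ hq.le, ← ENNReal.ofReal_mul hA.le, ← mul_assoc]
      gcongr
      exact hfg v
    _ = _ := by
      rw [ENNReal.tsum_mul_left, ENNReal.mul_rpow_of_nonneg _ _ (one_div_pos.2 hq).le,
        ← ENNReal.rpow_mul, mul_one_div_cancel hq.ne', ENNReal.rpow_one]
  have hflatten : dyadicSum (flattenCoeff α q lam) x = ∑' v, ENNReal.ofReal
      (cornerWeight α v (dyadicIndex v x) * ‖lam v (dyadicIndex v x)‖) ^ q :=
    tsum_congr fun v => (ENNReal.ofReal_rpow_of_nonneg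
      (mul_nonneg (cornerWeight_pos α v _).le (norm_nonneg _)) hq.le).symm
  rw [hflatten, squareFun]
  exact ⟨hcompare fun v => (hweight v x).1, hcompare fun v => (hweight v x).2⟩

lemma dyadicModular_div_eq_lintegral (p : En n → ℝ) (q : ℝ) (b : ℕ → (Fin n → ℤ) → ℝ) :
    dyadicModular (fun x => p x / q) b = ∫⁻ x, (dyadicSum b x ^ (1 / q)) ^ p x := by
  simp only [dyadicModular, ← ENNReal.rpow_mul, one_div_mul_eq_div]

lemma dyadicSum_smul_rpow_one_div {k : ℝ} (hk : 0 < k) (hq : 0 < q) (b : ℕ → (Fin n → ℤ) → ℝ)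
    (x : En n) :
    dyadicSum (k ^ q • b) x ^ (1 / q) = ENNReal.ofReal k * dyadicSum b x ^ (1 / q) := by
  rw [dyadicSum_smul (rpow_pos_of_pos hk q).le,
    ENNReal.mul_rpow_of_nonneg _ _ (one_div_pos.2 hq).le, ENNReal.ofReal_rpow_of_nonneg
    (rpow_pos_of_pos hk q).le (one_div_pos.2 hq).le, ← rpow_mul hk.le, mul_one_div_cancel hq.ne',
    Real.rpow_one]

lemma LocLogHolder.exists_dyadicModular_flattenCoeff_le_one (hα : LocLogHolder c α) (hq : 0 < q)
    (hp : ∀ x, 0 ≤ p x) :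
    ∃ A : ℝ, 0 < A ∧ ∀ (lam : ℕ → (Fin n → ℤ) → ℂ) (d : ℝ), 0 < d →
      ∫⁻ x, (squareFun α q lam x / ENNReal.ofReal d) ^ p x ≤ 1 →
      dyadicModular (fun x => p x / q) ((A * d)⁻¹ ^ q • flattenCoeff α q lam) ≤ 1 := by
  obtain ⟨A, hA, hequiv⟩ := hα.exists_squareFun_equiv
  refine ⟨A, hA, fun lam d hd hmod => ?_⟩
  rw [dyadicModular_div_eq_lintegral]
  refine (lintegral_mono fun x => ENNReal.rpow_le_rpow ?_ (hp x)).trans hmod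
  calc dyadicSum ((A * d)⁻¹ ^ q • flattenCoeff α q lam) x ^ (1 / q)
      = ENNReal.ofReal (A * d)⁻¹ * dyadicSum (flattenCoeff α q lam) x ^ (1 / q) :=
        dyadicSum_smul_rpow_one_div (by positivity) hq _ x
    _ ≤ ENNReal.ofReal (A * d)⁻¹ * (ENNReal.ofReal A * squareFun α q lam x) := by
        gcongr
        exact (hequiv q hq lam x).1
    _ = squareFun α q lam x / ENNReal.ofReal d := by
        rw [← mul_assoc, ← ENNReal.ofReal_mul (by positivity), mul_comm, div_eq_mul_inv,
          ← ENNReal.ofReal_inv_of_pos hd]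
        congr 2
        field_simp

lemma LocLogHolder.exists_seqNorm_unflattenCoeff_le_one (hα : LocLogHolder c α) (hq : 0 < q)
    (hp : ∀ x, 0 ≤ p x) :
    ∃ k : ℝ, 0 < k ∧ ∀ b : ℕ → (Fin n → ℤ) → ℝ, (∀ v m, 0 ≤ b v m) →
      dyadicModular (fun x => p x / q) b ≤ 1 →
      seqNorm α p (fun _ => q) (fun v m => (k * unflattenCoeff α q b v m : ℝ)) ≤ 1 := by
  obtain ⟨A, hA, hequiv⟩ := hα.exists_squareFun_equiv
  refine ⟨A⁻¹, by positivity, fun b hb hmod => ?_⟩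
  rw [seqNorm_eq_luxNorm_squareFun]
  rw [dyadicModular_div_eq_lintegral] at hmod
  refine sInf_le ⟨one_pos, (lintegral_mono fun x => ?_).trans hmod⟩
  rw [div_one]
  refine ENNReal.rpow_le_rpow ((hequiv q hq _ x).2.trans_eq ?_) (hp x)
  rw [flattenCoeff_smul_unflattenCoeff (by positivity) hq hb,
    dyadicSum_smul_rpow_one_div (by positivity) hq, ← mul_assoc, ← ENNReal.ofReal_mul hA.le,
    mul_inv_cancel₀ hA.ne', ENNReal.ofReal_one, one_mul]

lemma le_ofReal_mul_luxNorm {F : En n → ℝ≥0∞} {X : ℝ≥0∞} {C : ℝ} (hC : 0 < C)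
    (h : ∀ d, 0 < d → ∫⁻ x, (F x / ENNReal.ofReal d) ^ p x ≤ 1 → X ≤ ENNReal.ofReal (C * d)) :
    X ≤ ENNReal.ofReal C * luxNorm p F := by
  have hC₀ : ENNReal.ofReal C ≠ 0 := by simpa using hC
  rw [mul_comm, ← ENNReal.div_le_iff hC₀ ENNReal.ofReal_ne_top]
  refine le_sInf fun d ⟨hd, hmod⟩ => ?_
  rw [ENNReal.div_le_iff hC₀ ENNReal.ofReal_ne_top]
  rcases eq_or_ne d ∞ with rfl | hd_top
  · simp [hC₀]
  · have hd_real := ENNReal.toReal_pos hd.ne' hd_top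
    rw [← ENNReal.ofReal_toReal hd_top] at hmod ⊢
    rw [mul_comm, ← ENNReal.ofReal_mul hC.le]
    exact h _ hd_real hmod

end SequenceSpaces

section CalderonUpper

variable {n : ℕ} {α₀ α₁ α p₀ p₁ p : En n → ℝ} {c c₀ c₁ q₀ q₁ q θ : ℝ}

lemma mul_div_add_mul_div_eq_one (hq : q ≠ 0) (hq_eq : 1 / q = (1 - θ) / q₀ + θ / q₁) :
    (1 - θ) * q / q₀ + θ * q / q₁ = 1 := by
  rw [mul_div_right_comm, mul_div_right_comm, ← add_mul, ← hq_eq, one_div_mul_cancel hq]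

lemma calderonNorm_le_ofReal {N₀ N₁ : (ℕ → (Fin n → ℤ) → ℂ) → ℝ≥0∞} (hθ : θ ∈ Ioo (0 : ℝ) 1)
    {M : ℝ} (hM : 0 ≤ M) {lam : ℕ → (Fin n → ℤ) → ℂ} {f g : ℕ → (Fin n → ℤ) → ℝ}
    (hf : ∀ v m, 0 ≤ f v m) (hg : ∀ v m, 0 ≤ g v m)
    (hfN : N₀ (fun v m => (f v m : ℝ)) ≤ 1) (hgN : N₁ (fun v m => (g v m : ℝ)) ≤ 1)
    (hlam : ∀ v m, ‖lam v m‖ ≤ M * (f v m ^ (1 - θ) * g v m ^ θ)) :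
    calderonNorm N₀ N₁ θ lam ≤ ENNReal.ofReal M := by
  refine sInf_le ⟨_, _, hfN, hgN, fun v m => ?_⟩
  rw [Complex.norm_real, Complex.norm_real, Real.norm_of_nonneg (hf v m),
    Real.norm_of_nonneg (hg v m), ENNReal.ofReal_rpow_of_nonneg (hf v m) (sub_nonneg.2 hθ.2.le),
    ENNReal.ofReal_rpow_of_nonneg (hg v m) hθ.1.le, mul_assoc,
    ← ENNReal.ofReal_mul (rpow_nonneg (hf v m) _), ← ENNReal.ofReal_mul hM]
  exact ENNReal.ofReal_le_ofReal (hlam v m)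

lemma norm_le_mul_unflattenCoeff (hq : 0 < q) {k : ℝ} (hk : 0 ≤ k) {lam : ℕ → (Fin n → ℤ) → ℂ}
    {b : ℕ → (Fin n → ℤ) → ℝ} (hb : ∀ v m, 0 ≤ b v m) {v : ℕ} {m : Fin n → ℤ}
    (h : flattenCoeff α q lam v m ≤ k ^ q * b v m) :
    ‖lam v m‖ ≤ k * unflattenCoeff α q b v m := by
  have hw := cornerWeight_pos α v m
  have hroot : cornerWeight α v m * ‖lam v m‖ ≤ k * b v m ^ (1 / q) := by
    rw [← Real.rpow_le_rpow_iff (by positivity) (mul_nonneg hk (rpow_nonneg (hb v m) _)) hq,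
      mul_rpow hk (rpow_nonneg (hb v m) _), ← rpow_mul (hb v m), one_div_mul_cancel hq.ne',
      Real.rpow_one]
    exact h
  rwa [unflattenCoeff, ← mul_div_assoc, le_div_iff₀' hw]

lemma unflattenCoeff_rpow_mul_rpow (hq : q ≠ 0) (hα : ∀ x, α x = (1 - θ) * α₀ x + θ * α₁ x)
    {b₀ b₁ : ℕ → (Fin n → ℤ) → ℝ} (hb₀ : ∀ v m, 0 ≤ b₀ v m) (hb₁ : ∀ v m, 0 ≤ b₁ v m)
    (v : ℕ) (m : Fin n → ℤ) :
    unflattenCoeff α q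
        (fun v m => b₀ v m ^ ((1 - θ) * q / q₀) * b₁ v m ^ (θ * q / q₁)) v m =
      unflattenCoeff α₀ q₀ b₀ v m ^ (1 - θ) * unflattenCoeff α₁ q₁ b₁ v m ^ θ := by
  have he₀ : (1 - θ) * q / q₀ * (1 / q) = 1 / q₀ * (1 - θ) := by field_simp
  have he₁ : θ * q / q₁ * (1 / q) = 1 / q₁ * θ := by field_simp
  have hw₀ := (cornerWeight_pos α₀ v m).le
  have hw₁ := (cornerWeight_pos α₁ v m).le
  simp only [unflattenCoeff, cornerWeight_eq_mul hα]
  rw [mul_rpow (rpow_nonneg (hb₀ v m) _) (rpow_nonneg (hb₁ v m) _),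
    div_rpow (rpow_nonneg (hb₀ v m) _) hw₀, div_rpow (rpow_nonneg (hb₁ v m) _) hw₁,
    div_mul_div_comm]
  simp only [← rpow_mul (hb₀ v m), ← rpow_mul (hb₁ v m), he₀, he₁]

lemma norm_le_of_flattenCoeff_le (hq : 0 < q) {k C : ℝ} (hk : 0 < k) (hC : 0 ≤ C)
    (hα : ∀ x, α x = (1 - θ) * α₀ x + θ * α₁ x) {lam : ℕ → (Fin n → ℤ) → ℂ}
    {b₀ b₁ : ℕ → (Fin n → ℤ) → ℝ} (hb₀ : ∀ v m, 0 ≤ b₀ v m) (hb₁ : ∀ v m, 0 ≤ b₁ v m)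
    {v : ℕ} {m : Fin n → ℤ}
    (h : (k⁻¹ ^ q • flattenCoeff α q lam) v m ≤
      C * (b₀ v m ^ ((1 - θ) * q / q₀) * b₁ v m ^ (θ * q / q₁))) :
    ‖lam v m‖ ≤ k * C ^ (1 / q) *
      (unflattenCoeff α₀ q₀ b₀ v m ^ (1 - θ) * unflattenCoeff α₁ q₁ b₁ v m ^ θ) := by
  have hscale : (k * C ^ (1 / q)) ^ q = k ^ q * C := by
    rw [mul_rpow hk.le (rpow_nonneg hC _), ← rpow_mul hC, one_div_mul_cancel hq.ne',
      Real.rpow_one]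
  rw [← unflattenCoeff_rpow_mul_rpow hq.ne' hα hb₀ hb₁]
  refine norm_le_mul_unflattenCoeff hq (mul_nonneg hk.le (rpow_nonneg hC _))
    (fun v m => mul_nonneg (rpow_nonneg (hb₀ v m) _) (rpow_nonneg (hb₁ v m) _)) ?_
  rw [hscale, mul_assoc, ← inv_mul_le_iff₀ (rpow_pos_of_pos hk q), ← inv_rpow hk.le]
  exact h

theorem exists_calderonNorm_le_mul_seqNorm (hθ : θ ∈ Ioo (0 : ℝ) 1)
    (hq₀ : 0 < q₀) (hq₁ : 0 < q₁) (hq : 0 < q)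
    (hp₀ : SlowExponent p₀) (hp₁ : SlowExponent p₁) (hp : SlowExponent p)
    (hα₀ : LocLogHolder c₀ α₀) (hα₁ : LocLogHolder c₁ α₁) (hα : LocLogHolder c α)
    (hp_eq : ∀ x, 1 / p x = (1 - θ) / p₀ x + θ / p₁ x)
    (hq_eq : 1 / q = (1 - θ) / q₀ + θ / q₁)
    (hα_eq : ∀ x, α x = (1 - θ) * α₀ x + θ * α₁ x) :
    ∃ C : ℝ, 0 < C ∧ ∀ lam : ℕ → (Fin n → ℤ) → ℂ,
      calderonNorm (seqNorm α₀ p₀ fun _ => q₀) (seqNorm α₁ p₁ fun _ => q₁) θ lam ≤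
        ENNReal.ofReal C * seqNorm α p (fun _ => q) lam := by
  obtain ⟨A, hA, hflat⟩ := hα.exists_dyadicModular_flattenCoeff_le_one hq fun x => (hp.pos x).le
  obtain ⟨k₀, hk₀, hnorm₀⟩ :=
    hα₀.exists_seqNorm_unflattenCoeff_le_one hq₀ fun x => (hp₀.pos x).le
  obtain ⟨k₁, hk₁, hnorm₁⟩ :=
    hα₁.exists_seqNorm_unflattenCoeff_le_one hq₁ fun x => (hp₁.pos x).le
  have ht : (1 - θ) * q / q₀ + θ * q / q₁ = 1 :=
    mul_div_add_mul_div_eq_one hq.ne' hq_eq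
  have hrel (x : En n) : (p x / q)⁻¹ =
      (1 - θ) * q / q₀ / (p₀ x / q₀) + θ * q / q₁ / (p₁ x / q₁) := by
    rw [inv_div, div_div_div_cancel_right₀ hq₀.ne', div_div_div_cancel_right₀ hq₁.ne',
      mul_div_right_comm, mul_div_right_comm, ← add_mul, ← hp_eq, one_div_mul_eq_div]
  obtain ⟨C, hC, hfactor⟩ := exists_dyadicModular_factorization (hp.div_const hq)
    (hp₀.div_const hq₀) (hp₁.div_const hq₁) ht hrel
  refine ⟨A * C ^ (1 / q) / (k₀ ^ (1 - θ) * k₁ ^ θ), by positivity, fun lam => ?_⟩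
  rw [seqNorm_eq_luxNorm_squareFun]
  refine le_ofReal_mul_luxNorm (by positivity) fun d hd hmod => ?_
  obtain ⟨b₀, b₁, hb₀, hb₁, hmod₀, hmod₁, hb⟩ := hfactor _
    (fun v m => mul_nonneg (by positivity) (flattenCoeff_nonneg α q lam v m)) (hflat lam d hd hmod)
  have hu₀ (v m) := unflattenCoeff_nonneg (α := α₀) (q := q₀) hb₀ v m
  have hu₁ (v m) := unflattenCoeff_nonneg (α := α₁) (q := q₁) hb₁ v m
  refine calderonNorm_le_ofReal hθ (by positivity) (fun v m => mul_nonneg hk₀.le (hu₀ v m))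
    (fun v m => mul_nonneg hk₁.le (hu₁ v m)) (hnorm₀ b₀ hb₀ hmod₀) (hnorm₁ b₁ hb₁ hmod₁)
    fun v m => ?_
  rw [mul_rpow hk₀.le (hu₀ v m), mul_rpow hk₁.le (hu₁ v m)]
  refine (norm_le_of_flattenCoeff_le hq (by positivity) hC.le hα_eq hb₀ hb₁ (hb v m)).trans_eq ?_
  field_simp

end CalderonUpper

section CalderonLower

variable {n : ℕ} {α₀ α₁ α p₀ p₁ p : En n → ℝ} {q₀ q₁ q θ : ℝ}

lemma tsum_rpow_mul_rpow_le (f g : ℕ → ℝ≥0∞) {s t : ℝ} (hs : 0 ≤ s) (ht : 0 ≤ t)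
    (hst : s + t = 1) : ∑' v, f v ^ s * g v ^ t ≤ (∑' v, f v) ^ s * (∑' v, g v) ^ t := by
  simpa only [lintegral_count] using ENNReal.lintegral_mul_norm_pow_le (μ := Measure.count)
    (measurable_of_countable f).aemeasurable (measurable_of_countable g).aemeasurable hs ht hst

lemma rpow_mul_rpow_le_add (x y : ℝ≥0∞) {s t : ℝ} (hs : 0 ≤ s) (ht : 0 ≤ t) (hst : s + t = 1) :
    x ^ s * y ^ t ≤ x + y := calc
  x ^ s * y ^ t ≤ (x + y) ^ s * (x + y) ^ t := by gcongr <;> simp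
  _ = x + y := by rw [← ENNReal.rpow_add_of_nonneg _ _ hs ht, hst, ENNReal.rpow_one]

lemma tsum_rpow_rpow_one_div_le (hθ : θ ∈ Ioo (0 : ℝ) 1) (hq₀ : 0 < q₀) (hq₁ : 0 < q₁)
    (hq : 0 < q) (hq_eq : 1 / q = (1 - θ) / q₀ + θ / q₁) {f f₀ f₁ : ℕ → ℝ≥0∞} {M : ℝ≥0∞}
    (hf : ∀ v, f v ≤ M * f₀ v ^ (1 - θ) * f₁ v ^ θ) :
    (∑' v, f v ^ q) ^ (1 / q) ≤
      M * ((∑' v, f₀ v ^ q₀) ^ (1 / q₀)) ^ (1 - θ) * ((∑' v, f₁ v ^ q₁) ^ (1 / q₁)) ^ θ := by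
  have hθ' : 0 < 1 - θ := sub_pos.2 hθ.2
  have hθ₀ := hθ.1
  set t := (1 - θ) * q / q₀
  set t' := θ * q / q₁
  have ht : t + t' = 1 := mul_div_add_mul_div_eq_one hq.ne' hq_eq
  have he₀ : q₀ * t = (1 - θ) * q := by simp only [t]; field_simp
  have he₁ : q₁ * t' = θ * q := by simp only [t']; field_simp
  have hroot₀ : t * (1 / q) = 1 / q₀ * (1 - θ) := by simp only [t]; field_simp
  have hroot₁ : t' * (1 / q) = 1 / q₁ * θ := by simp only [t']; field_simp
  calc (∑' v, f v ^ q) ^ (1 / q)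
      ≤ (∑' v, M ^ q * ((f₀ v ^ q₀) ^ t * (f₁ v ^ q₁) ^ t')) ^ (1 / q) := by
        gcongr with v
        refine (ENNReal.rpow_le_rpow (hf v) hq.le).trans_eq ?_
        rw [ENNReal.mul_rpow_of_nonneg _ _ hq.le, ENNReal.mul_rpow_of_nonneg _ _ hq.le, mul_assoc]
        simp only [← ENNReal.rpow_mul, he₀, he₁]
    _ ≤ (M ^ q * ((∑' v, f₀ v ^ q₀) ^ t * (∑' v, f₁ v ^ q₁) ^ t')) ^ (1 / q) := by
        rw [ENNReal.tsum_mul_left]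
        gcongr
        exact tsum_rpow_mul_rpow_le _ _ (by positivity) (by positivity) ht
    _ = _ := by
        rw [ENNReal.mul_rpow_of_nonneg _ _ (one_div_pos.2 hq).le,
          ENNReal.mul_rpow_of_nonneg _ _ (one_div_pos.2 hq).le, ← mul_assoc]
        simp only [← ENNReal.rpow_mul, mul_one_div_cancel hq.ne', ENNReal.rpow_one, hroot₀, hroot₁]

lemma squareFun_le_mul_rpow_mul_rpow (hθ : θ ∈ Ioo (0 : ℝ) 1) (hq₀ : 0 < q₀) (hq₁ : 0 < q₁)
    (hq : 0 < q) (hq_eq : 1 / q = (1 - θ) / q₀ + θ / q₁)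
    (hα : ∀ x, α x = (1 - θ) * α₀ x + θ * α₁ x) {lam μ ν : ℕ → (Fin n → ℤ) → ℂ} {M : ℝ≥0∞}
    (h : ∀ v m, ENNReal.ofReal ‖lam v m‖ ≤
      M * ENNReal.ofReal ‖μ v m‖ ^ (1 - θ) * ENNReal.ofReal ‖ν v m‖ ^ θ) (x : En n) :
    squareFun α q lam x ≤ M * squareFun α₀ q₀ μ x ^ (1 - θ) * squareFun α₁ q₁ ν x ^ θ := by
  refine tsum_rpow_rpow_one_div_le hθ hq₀ hq₁ hq hq_eq fun v => ?_
  have hweight : (2 : ℝ) ^ ((v : ℝ) * (α x + n / 2)) =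
      (2 ^ ((v : ℝ) * (α₀ x + n / 2))) ^ (1 - θ) * (2 ^ ((v : ℝ) * (α₁ x + n / 2))) ^ θ := by
    rw [← rpow_mul zero_le_two, ← rpow_mul zero_le_two, ← rpow_add two_pos, hα]
    ring_nf
  have hpow {k : ℝ} (hk : 0 ≤ k) (y z : ℝ) : ENNReal.ofReal (2 ^ y * z) ^ k =
      ENNReal.ofReal ((2 ^ y) ^ k) * ENNReal.ofReal z ^ k := by
    rw [ENNReal.ofReal_mul (by positivity), ENNReal.mul_rpow_of_nonneg _ _ hk,
      ENNReal.ofReal_rpow_of_nonneg (by positivity) hk]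
  rw [hpow (sub_nonneg.2 hθ.2.le), hpow hθ.1.le, ENNReal.ofReal_mul (by positivity), hweight,
    ENNReal.ofReal_mul (by positivity)]
  exact (mul_le_mul_right (h v (dyadicIndex v x)) _).trans_eq (by ring)

lemma lintegral_div_two_rpow_le_one {F : En n → ℝ≥0∞} (hp : ∀ x, 0 ≤ p x)
    (hF : luxNorm p F ≤ 1) : ∫⁻ x, (F x / 2) ^ p x ≤ 1 := by
  obtain ⟨c, ⟨-, hc⟩, hc2⟩ := sInf_lt_iff.1 (hF.trans_lt one_lt_two)
  refine le_trans (lintegral_mono fun x => ?_) hc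
  exact ENNReal.rpow_le_rpow (ENNReal.div_le_div_left hc2.le _) (hp x)

lemma lintegral_rpow_mul_rpow_rpow_le {G H : En n → ℝ≥0∞} (hθ : θ ∈ Ioo (0 : ℝ) 1)
    (hp₀ : ∀ x, 0 < p₀ x) (hp₁ : ∀ x, 0 < p₁ x) (hp : ∀ x, 0 < p x)
    (hp_eq : ∀ x, 1 / p x = (1 - θ) / p₀ x + θ / p₁ x)
    (hp₀m : Measurable p₀) (hG : Measurable G) :
    ∫⁻ x, (G x ^ (1 - θ) * H x ^ θ) ^ p x ≤ (∫⁻ x, G x ^ p₀ x) + ∫⁻ x, H x ^ p₁ x := by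
  rw [← lintegral_add_left (hG.pow hp₀m)]
  refine lintegral_mono fun x => ?_
  have hp_pos := hp x
  have hp₀_pos := hp₀ x
  have hp₁_pos := hp₁ x
  have hθ' : 0 < 1 - θ := sub_pos.2 hθ.2
  have hθ₀ := hθ.1
  have he₀ : (1 - θ) * p x = p₀ x * ((1 - θ) * p x / p₀ x) := by field_simp
  have he₁ : θ * p x = p₁ x * (θ * p x / p₁ x) := by field_simp
  rw [ENNReal.mul_rpow_of_nonneg _ _ hp_pos.le, ← ENNReal.rpow_mul, ← ENNReal.rpow_mul, he₀, he₁,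
    ENNReal.rpow_mul, ENNReal.rpow_mul]
  exact rpow_mul_rpow_le_add _ _ (by positivity) (by positivity)
    (mul_div_add_mul_div_eq_one hp_pos.ne' (hp_eq x))

lemma rpow_mul_rpow_eq_two_mul (hθ : θ ∈ Ioo (0 : ℝ) 1) (x y : ℝ≥0∞) :
    x ^ (1 - θ) * y ^ θ = 2 * ((x / 2) ^ (1 - θ) * (y / 2) ^ θ) := by
  have hθ' : 0 ≤ 1 - θ := sub_nonneg.2 hθ.2.le
  have htwo : (2 : ℝ≥0∞) ^ (1 - θ) * 2 ^ θ = 2 := by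
    rw [← ENNReal.rpow_add_of_nonneg _ _ hθ' hθ.1.le, sub_add_cancel, ENNReal.rpow_one]
  nth_rw 1 [← htwo]
  rw [mul_mul_mul_comm, ← ENNReal.mul_rpow_of_nonneg _ _ hθ',
    ← ENNReal.mul_rpow_of_nonneg _ _ hθ.1.le, ENNReal.mul_div_cancel two_ne_zero ofNat_ne_top,
    ENNReal.mul_div_cancel two_ne_zero ofNat_ne_top]

lemma exists_mul_luxNorm_le (hθ : θ ∈ Ioo (0 : ℝ) 1)
    (hp₀ : ∀ x, 0 < p₀ x) (hp₁ : ∀ x, 0 < p₁ x) {a : ℝ} (ha : 0 < a) (hp : ∀ x, a ≤ p x)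
    (hp_eq : ∀ x, 1 / p x = (1 - θ) / p₀ x + θ / p₁ x) (hp₀m : Measurable p₀) :
    ∃ c : ℝ, 0 < c ∧ ∀ (F G H : En n → ℝ≥0∞) (M : ℝ≥0∞), Measurable G →
      (∀ x, F x ≤ M * G x ^ (1 - θ) * H x ^ θ) → luxNorm p₀ G ≤ 1 → luxNorm p₁ H ≤ 1 →
      ENNReal.ofReal c * luxNorm p F ≤ M := by
  have hp_pos (x : En n) : 0 < p x := ha.trans_le (hp x)
  obtain ⟨δ, hδ, hscale⟩ := exists_modular_smul_le_one ha hp 2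
  refine ⟨δ / 2, by positivity, fun F G H M hG hF hG₁ hH₁ => ?_⟩
  have hmod : ∫⁻ x, ((G x / 2) ^ (1 - θ) * (H x / 2) ^ θ) ^ p x ≤ ENNReal.ofReal 2 := calc
    _ ≤ (∫⁻ x, (G x / 2) ^ p₀ x) + ∫⁻ x, (H x / 2) ^ p₁ x :=
      lintegral_rpow_mul_rpow_rpow_le hθ hp₀ hp₁ hp_pos hp_eq hp₀m (hG.div_const 2)
    _ ≤ 1 + 1 := add_le_add (lintegral_div_two_rpow_le_one (fun x => (hp₀ x).le) hG₁)
      (lintegral_div_two_rpow_le_one (fun x => (hp₁ x).le) hH₁)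
    _ = ENNReal.ofReal 2 := by rw [one_add_one_eq_two, ENNReal.ofReal_ofNat]
  refine le_of_forall_gt_imp_ge_of_dense fun M' hM' => ?_
  have hM'_pos : M' ≠ 0 := (zero_le.trans_lt hM').ne'
  have hk : ENNReal.ofReal (δ / 2) ≠ 0 := by simpa using hδ
  rw [mul_comm, ← ENNReal.le_div_iff_mul_le (.inl hk) (.inl ENNReal.ofReal_ne_top)]
  refine sInf_le ⟨ENNReal.div_pos hM'_pos ENNReal.ofReal_ne_top, ?_⟩
  refine (lintegral_mono fun x => ENNReal.rpow_le_rpow ?_ (hp_pos x).le).trans (hscale _ hmod)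
  have hδ2 : ENNReal.ofReal δ = ENNReal.ofReal (δ / 2) * 2 := by
    rw [← ENNReal.ofReal_ofNat 2, ← ENNReal.ofReal_mul (by positivity),
      div_mul_cancel₀ _ two_ne_zero]
  refine ENNReal.div_le_of_le_mul' ?_
  calc F x ≤ M' * (G x ^ (1 - θ) * H x ^ θ) := by
        rw [← mul_assoc]
        refine (hF x).trans ?_
        gcongr
    _ = M' / ENNReal.ofReal (δ / 2) *
          (ENNReal.ofReal δ * ((G x / 2) ^ (1 - θ) * (H x / 2) ^ θ)) := by
        rw [rpow_mul_rpow_eq_two_mul hθ, hδ2, mul_assoc, ← mul_assoc (M' / _),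
          ENNReal.div_mul_cancel hk ENNReal.ofReal_ne_top]

theorem exists_mul_seqNorm_le_calderonNorm (hθ : θ ∈ Ioo (0 : ℝ) 1)
    (hq₀ : 0 < q₀) (hq₁ : 0 < q₁) (hq : 0 < q)
    (hp₀ : ∀ x, 0 < p₀ x) (hp₁ : ∀ x, 0 < p₁ x) {a : ℝ} (ha : 0 < a) (hp : ∀ x, a ≤ p x)
    (hp_eq : ∀ x, 1 / p x = (1 - θ) / p₀ x + θ / p₁ x)
    (hp₀m : Measurable p₀) (hα₀m : Measurable α₀)
    (hq_eq : 1 / q = (1 - θ) / q₀ + θ / q₁)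
    (hα_eq : ∀ x, α x = (1 - θ) * α₀ x + θ * α₁ x) :
    ∃ c : ℝ, 0 < c ∧ ∀ lam : ℕ → (Fin n → ℤ) → ℂ,
      ENNReal.ofReal c * seqNorm α p (fun _ => q) lam ≤
        calderonNorm (seqNorm α₀ p₀ fun _ => q₀) (seqNorm α₁ p₁ fun _ => q₁) θ lam := by
  obtain ⟨c, hc, hholder⟩ := exists_mul_luxNorm_le hθ hp₀ hp₁ ha hp hp_eq hp₀m
  refine ⟨c, hc, fun lam => le_sInf fun M ⟨μ, ν, hμ, hν, hM⟩ => ?_⟩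
  rw [seqNorm_eq_luxNorm_squareFun] at hμ hν ⊢
  exact hholder _ _ _ M (measurable_squareFun hα₀m q₀ μ)
    (squareFun_le_mul_rpow_mul_rpow hθ hq₀ hq₁ hq hq_eq hα_eq hM) hμ hν

end CalderonLower

theorem stmt15_general {n : ℕ} {θ : ℝ} (hθ : θ ∈ Ioo (0 : ℝ) 1)
    {q₀ q₁ q : ℝ} (hq₀ : 0 < q₀) (hq₁ : 0 < q₁) {p₀ p₁ α₀ α₁ p α : En n → ℝ}
    (hp₀ : ∃ c, GlobLogHolder c p₀) (hp₁ : ∃ c, GlobLogHolder c p₁)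
    (hp₀b : ∃ a b : ℝ, 0 < a ∧ ∀ x, p₀ x ∈ Icc a b)
    (hp₁b : ∃ a b : ℝ, 0 < a ∧ ∀ x, p₁ x ∈ Icc a b)
    (hα₀ : ∃ c, LocLogHolder c α₀) (hα₁ : ∃ c, LocLogHolder c α₁)
    (hp : ∀ x, 1 / p x = (1 - θ) / p₀ x + θ / p₁ x)
    (hq : 1 / q = (1 - θ) / q₀ + θ / q₁)
    (hα : ∀ x, α x = (1 - θ) * α₀ x + θ * α₁ x) :
    ∃ c₁ c₂ : ℝ, 0 < c₁ ∧ 0 < c₂ ∧ ∀ lam : ℕ → (Fin n → ℤ) → ℂ,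
      ENNReal.ofReal c₁ * seqNorm α p (fun _ => q) lam ≤
          calderonNorm (seqNorm α₀ p₀ fun _ => q₀) (seqNorm α₁ p₁ fun _ => q₁) θ lam ∧
        calderonNorm (seqNorm α₀ p₀ fun _ => q₀) (seqNorm α₁ p₁ fun _ => q₁) θ lam ≤
          ENNReal.ofReal c₂ * seqNorm α p (fun _ => q) lam := by
  have hθ₀ : 0 < θ := hθ.1
  have hθ' : 0 < 1 - θ := sub_pos.2 hθ.2
  obtain ⟨_, hp₀⟩ := hp₀
  obtain ⟨_, hp₁⟩ := hp₁
  obtain ⟨_, hα₀⟩ := hα₀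
  obtain ⟨_, hα₁⟩ := hα₁
  replace hp₀ := hp₀.slowExponent hp₀b
  replace hp₁ := hp₁.slowExponent hp₁b
  have hq_pos : 0 < q := one_div_pos.1 (hq ▸ by positivity)
  have hp_eq : p = fun x => ((1 - θ) * (p₀ x)⁻¹ + θ * (p₁ x)⁻¹)⁻¹ := by
    funext x
    rw [← div_eq_mul_inv, ← div_eq_mul_inv, ← hp, one_div, inv_inv]
  have hp_slow : SlowExponent p :=
    hp_eq ▸ ((hp₀.inv.const_mul hθ').add (hp₁.inv.const_mul hθ₀)).inv
  obtain ⟨a, _, ha, hab⟩ := hp_slow.bounded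
  have hα_log := funext hα ▸ (hα₀.const_mul hθ').add (hα₁.const_mul hθ₀)
  obtain ⟨c₁, hc₁, hlower⟩ := exists_mul_seqNorm_le_calderonNorm hθ hq₀ hq₁ hq_pos hp₀.pos
    hp₁.pos ha (fun x => (hab x).1) hp hp₀.measurable hα₀.continuous.measurable hq hα
  obtain ⟨c₂, hc₂, hupper⟩ := exists_calderonNorm_le_mul_seqNorm hθ hq₀ hq₁ hq_pos hp₀ hp₁
    hp_slow hα₀ hα₁ hα_log hp hq hα
  exact ⟨c₁, c₂, hc₁, hc₂, fun lam => ⟨hlower lam, hupper lam⟩⟩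

/-- Theorem `calderon-prod11 copy(1)` (ii): for constant `q₀, q₁`, if
`γ(x) = p(x)/p₀(x) − q/q₀ ≠ 0` for all `x`, then
`(f^{α₀(·)}_{p₀(·),q₀})^{1−θ}·(f^{α₁(·)}_{p₁(·),q₁})^θ = f^{α(·)}_{p(·),q}`
with equivalent norms. -/
theorem stmt15 {n : ℕ} (θ : ℝ) (hθ : θ ∈ Set.Ioo (0 : ℝ) 1)
    (q₀ q₁ q : ℝ) (hq₀ : 1 ≤ q₀) (hq₁ : 1 ≤ q₁)
    (p₀ p₁ α₀ α₁ p α : En n → ℝ)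
    (hp₀ : ∃ c, GlobLogHolder c p₀) (hp₁ : ∃ c, GlobLogHolder c p₁)
    (hp₀b : ∃ b : ℝ, ∀ x, 1 ≤ p₀ x ∧ p₀ x ≤ b)
    (hp₁b : ∃ b : ℝ, ∀ x, 1 ≤ p₁ x ∧ p₁ x ≤ b)
    (hα₀ : ∃ c, LocLogHolder c α₀) (hα₁ : ∃ c, LocLogHolder c α₁)
    (hp : ∀ x, 1 / p x = (1 - θ) / p₀ x + θ / p₁ x)
    (hq : 1 / q = (1 - θ) / q₀ + θ / q₁)
    (hα : ∀ x, α x = (1 - θ) * α₀ x + θ * α₁ x)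
    (hγ : ∀ x, p x / p₀ x - q / q₀ ≠ 0) :
    ∃ c₁ c₂ : ℝ, 0 < c₁ ∧ 0 < c₂ ∧ ∀ lam : ℕ → (Fin n → ℤ) → ℂ,
      ENNReal.ofReal c₁ * seqNorm α p (fun _ => q) lam ≤
          calderonNorm (seqNorm α₀ p₀ fun _ => q₀) (seqNorm α₁ p₁ fun _ => q₁) θ lam ∧
        calderonNorm (seqNorm α₀ p₀ fun _ => q₀) (seqNorm α₁ p₁ fun _ => q₁) θ lam ≤
          ENNReal.ofReal c₂ * seqNorm α p (fun _ => q) lam := by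
  exact stmt15_general hθ (one_pos.trans_le hq₀) (one_pos.trans_le hq₁) hp₀ hp₁
    ⟨1, hp₀b.imp fun _ hb => ⟨one_pos, hb⟩⟩ ⟨1, hp₁b.imp fun _ hb => ⟨one_pos, hb⟩⟩
    hα₀ hα₁ hp hq hα
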